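/- arXiv:2111.09923 — 3 statements merged into one kernel-verified Lean document; each statement's English description precedes it below -/
import Mathlib

section
/- Let p ≥ 3 be a prime, δ ∈ (0,1] and ε > 0. There exist constants c, C > 0 depending only on p, δ and ε such that: for every real-split central division ℚ-algebra A of degree p, every order 𝒪 ⊆ A with discriminant D = disc(𝒪), every z ∈ GL_p(ℝ), and every positive integer m with m ≤ c·D^{1/(4p(p-1)) − ε}, the set 𝒪(m; z, δ) is finite with #𝒪(m; z, δ) ≤ C·m^ε. -/
open Matrix

/-- `IsSO k` : `k ∈ SO(n)`. -/
def IsSO {n : ℕ} (k : Matrix (Fin n) (Fin n) ℝ) : Prop :=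
  kᵀ * k = 1 ∧ k.det = 1

/-- An order in a `ℚ`-algebra: a subring which is finitely generated as a `ℤ`-module and
contains a `ℚ`-basis of the algebra. -/
def IsOrder (A : Type*) [Ring A] [Algebra ℚ A] (O : Subring A) : Prop :=
  O.toAddSubgroup.FG ∧ Submodule.span ℚ (O : Set A) = ⊤

/-- The set `𝒪(m; z, δ)`. -/
noncomputable def OSet {n : ℕ} {A : Type*} [DivisionRing A] [CharZero A]
    (ι : A →ₐ[ℚ] Matrix (Fin n) (Fin n) ℝ) (O : Subring A)
    (z : Matrix.GeneralLinearGroup (Fin n) ℝ) (m : ℕ) (δ : ℝ) : Set A :=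
  {γ | γ ∈ O ∧ (ι γ).det = (m : ℝ) ∧
    ∃ k : Matrix (Fin n) (Fin n) ℝ, IsSO k ∧
      ∀ i j, |(((m : ℝ) ^ (-(1 : ℝ) / (n : ℝ))) •
        ((↑z⁻¹ : Matrix (Fin n) (Fin n) ℝ) * ι γ * (↑z : Matrix (Fin n) (Fin n) ℝ)) - k) i j| < δ}

/-- `D` is the discriminant of the order `𝒪`. -/
def IsDisc {n : ℕ} {A : Type*} [DivisionRing A] [CharZero A]
    (ι : A →ₐ[ℚ] Matrix (Fin n) (Fin n) ℝ) (O : Subring A) (D : ℕ) : Prop :=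
  Ideal.span {d : ℤ | ∃ x : Fin (n ^ 2) → A, (∀ i, x i ∈ O) ∧
      (d : ℝ) = (Matrix.of fun i j => (ι (x i * x j)).trace).det} = Ideal.span {(D : ℤ)}



lemma aux_kron {p : ℕ} (M : Matrix (Fin p) (Fin p) ℝ) :
    Algebra.leftMulMatrix (Matrix.stdBasis ℝ (Fin p) (Fin p)) M
      = Matrix.kroneckerMap (· * ·) M (1 : Matrix (Fin p) (Fin p) ℝ) := by
  ext ⟨i, j⟩ ⟨k, l⟩
  rw [Algebra.leftMulMatrix_eq_repr_mul, Matrix.stdBasis_eq_single]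
  have : ∀ N : Matrix (Fin p) (Fin p) ℝ, (Matrix.stdBasis ℝ (Fin p) (Fin p)).repr N (i, j) = N i j := by
    intro N
    simp [Matrix.stdBasis, Pi.basis_repr]
  rw [this]
  simp [Matrix.mul_apply, Matrix.single_apply, Matrix.one_apply]
  by_cases h : l = j
  · subst h; simp
  · simp [h, Ne.symm h]

lemma aux_norm {p : ℕ} (M : Matrix (Fin p) (Fin p) ℝ) :
    Algebra.norm ℝ M = M.det ^ p := by
  have hb := Algebra.norm_eq_matrix_det (Matrix.stdBasis ℝ (Fin p) (Fin p)) M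
  rw [hb, aux_kron, Matrix.det_kronecker]
  simp

lemma aux_trace {p : ℕ} (M : Matrix (Fin p) (Fin p) ℝ) :
    LinearMap.trace ℝ _ (LinearMap.mulLeft ℝ M) = p * M.trace := by
  rw [LinearMap.trace_eq_matrix_trace ℝ (Matrix.stdBasis ℝ (Fin p) (Fin p)),
    Algebra.toMatrix_lmul_eq, aux_kron]
  simp [Matrix.trace_kronecker, mul_comm]

/-- finrank divisibility -/
lemma aux_dvd {A : Type} [DivisionRing A] [CharZero A] [FiniteDimensional ℚ A]
    (B : Subalgebra ℚ A) (U : Submodule ℚ A) (h : ∀ b ∈ B, ∀ u ∈ U, b * u ∈ U) :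
    Module.finrank ℚ B ∣ Module.finrank ℚ U := by
  let iM : Module B U :=
    { smul := fun b u => ⟨b.1 * u.1, h b b.2 u u.2⟩
      one_smul := fun u => Subtype.ext (one_mul _)
      mul_smul := fun a b u => Subtype.ext (mul_assoc _ _ _)
      smul_zero := fun a => Subtype.ext (mul_zero _)
      smul_add := fun a b u => Subtype.ext (mul_add _ _ _)
      add_smul := fun a b u => Subtype.ext (add_mul _ _ _)
      zero_smul := fun a => Subtype.ext (zero_mul _) }
  have : IsScalarTower ℚ B U := ⟨fun q b u => Subtype.ext (smul_mul_assoc q b.1 u.1)⟩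
  have : Module.Free B U := @Module.Free.of_divisionRing B U (divisionRingOfFiniteDimensional ℚ B) _ iM
  have : StrongRankCondition B := by
    let := divisionRingOfFiniteDimensional ℚ B
    infer_instance
  exact ⟨_, (Module.finrank_mul_finrank ℚ B U).symm⟩

/-- base change of left multiplication -/
lemma aux_base {p : ℕ} {A : Type} [DivisionRing A] [CharZero A]
    (ι : A →ₐ[ℚ] Matrix (Fin p) (Fin p) ℝ) {n : Type} [Fintype n] [DecidableEq n]
    (b : Module.Basis n ℚ A)
    (b' : Module.Basis n ℝ (Matrix (Fin p) (Fin p) ℝ)) (h : ∀ i, b' i = ι (b i)) (a : A) :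
    Algebra.leftMulMatrix b' (ι a) = (Algebra.leftMulMatrix b a).map (algebraMap ℚ ℝ) := by
  ext i j
  rw [Matrix.map_apply, Algebra.leftMulMatrix_eq_repr_mul, Algebra.leftMulMatrix_eq_repr_mul]
  have : ι a * b' j = ∑ k, ((b.repr (a * b j) k : ℚ) : ℝ) • b' k := by
    rw [h, ← map_mul]
    conv_lhs => rw [← b.sum_repr (a * b j)]
    rw [map_sum]
    refine Finset.sum_congr rfl fun k _ => ?_
    rw [map_smul, h]
    ext; simp [Rat.smul_def]
  rw [this, b'.repr_sum_self]
  simp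

/-- norm on the subfield -/
lemma aux_normK {A : Type} [DivisionRing A] [CharZero A] [FiniteDimensional ℚ A]
    {K : Type} [Field K] [NumberField K] (f : K →ₐ[ℚ] A) :
    ∃ r : ℕ, 0 < r ∧ ∀ g : K, Algebra.norm ℚ (f g) = (Algebra.norm ℚ g) ^ r := by
  let iM : Module K A := Module.compHom A (f : K →+* A)
  have hs : ∀ (k : K) (a : A), k • a = f k * a := fun k a => rfl
  have : IsScalarTower ℚ K A := ⟨fun q k a => by
    rw [hs, hs, Rat.smul_def, map_mul, map_ratCast, Rat.smul_def, mul_assoc]⟩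
  have : Module.Finite K A := Module.Finite.of_restrictScalars_finite ℚ K A
  refine ⟨Module.finrank K A, Module.finrank_pos, fun g => ?_⟩
  have h := LinearMap.det_restrictScalars (R := ℚ) (S := K) (A := A) (f := g • LinearMap.id)
  rw [LinearMap.det_smul, LinearMap.det_id, mul_one, map_pow] at h
  rw [← h, Algebra.norm_apply]
  congr 1

lemma aux_nf {A : Type} [DivisionRing A] [CharZero A] [FiniteDimensional ℚ A]
    {K : Type} [Field K] (f : K →+* A) : NumberField K := by
  have hcz : CharZero K := ⟨fun a b hab => by
    have := congrArg f hab
    simpa using this⟩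
  have : FiniteDimensional ℚ K :=
    FiniteDimensional.of_injective f.toRatAlgHom.toLinearMap f.injective
  exact { }

/-- the commutative subfield generated by a commuting set -/
lemma aux_field {A : Type} [DivisionRing A] [CharZero A] [FiniteDimensional ℚ A]
    (S : Set A) (hS : ∀ a ∈ S, ∀ b ∈ S, a * b = b * a) :
    ∃ (K : Type) (_ : Field K) (_ : NumberField K) (f : K →ₐ[ℚ] A),
      ∀ a ∈ S, ∃ g : K, f g = a := by
  have hc := Algebra.isMulCommutative_adjoin ℚ hS
  let iC : CommRing (Algebra.adjoin ℚ S) :=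
    { (inferInstance : Ring (Algebra.adjoin ℚ S)) with
      mul_comm := hc.is_comm.comm }
  let iF : Field (Algebra.adjoin ℚ S) := fieldOfFiniteDimensional ℚ (Algebra.adjoin ℚ S)
  let f : Algebra.adjoin ℚ S →+* A :=
    { toFun := fun x => x.1
      map_one' := rfl
      map_mul' := fun _ _ => rfl
      map_zero' := rfl
      map_add' := fun _ _ => rfl }
  have hnf : NumberField (Algebra.adjoin ℚ S) := aux_nf f
  exact ⟨Algebra.adjoin ℚ S, iF, hnf, f.toRatAlgHom,
    fun a ha => ⟨⟨a, Algebra.subset_adjoin ha⟩, rfl⟩⟩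

lemma aux_int {A : Type} [DivisionRing A] [CharZero A] [FiniteDimensional ℚ A]
    {K : Type} [Field K] [NumberField K] (f : K →ₐ[ℚ] A) (v : NumberField.RingOfIntegers K) (hv : v ≠ 0) :
    1 ≤ |(Algebra.norm ℚ (f v))| := by
  obtain ⟨r, -, hr⟩ := aux_normK f
  rw [hr, abs_pow]
  apply one_le_pow₀
  rw [← Algebra.coe_norm_int]
  have : Algebra.norm ℤ v ≠ 0 := by simpa using hv
  exact_mod_cast Int.one_le_abs this

lemma aux_dvdM {A : Type} [DivisionRing A] [CharZero A] [FiniteDimensional ℚ A]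
    {K : Type} [Field K] [NumberField K] (f : K →ₐ[ℚ] A) (v : NumberField.RingOfIntegers K) 
    (M : ℕ) (hM : Algebra.norm ℚ (f v) = M) :
    Ideal.span {v} ∣ Ideal.span {(M : NumberField.RingOfIntegers K)} := by
  obtain ⟨r, hr0, hr⟩ := aux_normK f
  rw [hr, ← Algebra.coe_norm_int] at hM
  have hM' : (Algebra.norm ℤ v) ^ r = M := by exact_mod_cast hM
  have h1 : (Ideal.absNorm (Ideal.span {v})) ∣ M := by
    rw [Ideal.absNorm_span_singleton]
    have : (Algebra.norm ℤ v) ∣ (M : ℤ) := hM' ▸ dvd_pow_self _ hr0.ne'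
    simpa using Int.natAbs_dvd_natAbs.mpr this
  rw [Ideal.dvd_iff_le, Ideal.span_singleton_le_iff_mem]
  obtain ⟨c, rfl⟩ := h1
  push_cast
  exact Ideal.mul_mem_right _ _ (Ideal.absNorm_mem _)

open NumberField in
lemma aux_small {K : Type} [Field K] [NumberField K] (d X : ℕ) (hd : Module.finrank ℚ K ≤ d)
    (T : Finset (Ideal (𝓞 K))) (hT : ∀ P ∈ T, P.IsPrime ∧ P ≠ ⊥ ∧ Ideal.absNorm P < X) :
    T.card ≤ d * X := by
  classical
  have hq : ∀ P : Ideal (𝓞 K), ∃ q : ℕ, P ∈ T → q.Prime ∧ q < X ∧ (q : 𝓞 K) ∈ P := by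
    intro P
    by_cases hP : P ∈ T
    · obtain ⟨h1, h2, h3⟩ := hT P hP
      have h0 : Ideal.absNorm P ≠ 0 := by rwa [Ne, Ideal.absNorm_eq_zero_iff]
      have hm := Ideal.absNorm_mem P
      have : ((Ideal.absNorm P).primeFactorsList.map (fun n : ℕ => (n : 𝓞 K))).prod ∈ P := by
        rw [← Nat.cast_list_prod, Nat.prod_primeFactorsList h0]; exact hm
      obtain ⟨x, hx, hxP⟩ := (h1.multiset_prod_mem_iff_exists_mem (Multiset.ofList _)).1 (by simpa using this)
      obtain ⟨q, hq, rfl⟩ := List.mem_map.1 (Multiset.mem_coe.1 hx)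
      refine ⟨q, fun _ => ⟨Nat.prime_of_mem_primeFactorsList hq, ?_, hxP⟩⟩
      exact lt_of_le_of_lt (Nat.le_of_mem_primeFactorsList hq) h3
    · exact ⟨0, fun h => absurd h hP⟩
  choose q hq using hq
  have hcard := Finset.card_le_mul_card_image_of_maps_to (s := T) (t := Finset.range X) (f := q)
    (fun P hP => Finset.mem_range.2 (hq P hP).2.1) d ?_
  · simpa using hcard
  · intro a ha
    by_cases hne : (T.filter (fun P => q P = a)).Nonempty
    · obtain ⟨P0, hP0⟩ := hne
      rw [Finset.mem_filter] at hP0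
      have hap : a.Prime := hP0.2 ▸ (hq P0 hP0.1).1
      have hmax : (Ideal.span {(a : ℤ)}).IsMaximal :=
        PrincipalIdealRing.isMaximal_of_irreducible (Nat.prime_iff_prime_int.1 hap).irreducible
      have hbot : Ideal.span {(a : ℤ)} ≠ ⊥ := by
        simpa using hap.ne_zero
      refine le_trans (Finset.card_le_card (t := IsDedekindDomain.primesOverFinset (Ideal.span {(a : ℤ)}) (𝓞 K)) ?_)
        ((Ideal.card_primesOverFinset_le_finrank (𝓞 K) ℚ K hbot).trans hd)
      intro P hP
      rw [Finset.mem_filter] at hP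
      rw [IsDedekindDomain.mem_primesOverFinset_iff hbot]
      refine ⟨(hT P hP.1).1, ⟨?_⟩⟩
      have := (hT P hP.1).1
      refine hmax.eq_of_le (Ideal.IsPrime.ne_top inferInstance) ?_
      rw [Ideal.span_singleton_le_iff_mem, Ideal.mem_under]
      have := (hq P hP.1).2.2
      rw [hP.2] at this
      simpa using this
    · rw [Finset.not_nonempty_iff_eq_empty.1 hne]; simp

lemma aux_term (e : ℝ) (he : 0 < e) : ∃ (B : ℝ) (X : ℕ), 1 ≤ B ∧ ∀ c N : ℕ, 2 ≤ N →
    (c + 1 : ℝ) ≤ (if N < X then B else 1) * ((N : ℝ) ^ c) ^ e := by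
  have ht : (0:ℝ) < 2 ^ e - 1 := by
    have := Real.one_lt_rpow (by norm_num : (1:ℝ) < 2) he
    linarith
  refine ⟨1 + 1 / (2 ^ e - 1), ⌈(2:ℝ) ^ (1 / e)⌉₊, by have := div_pos one_pos ht; linarith, ?_⟩
  intro c N hN
  have hN' : (2:ℝ) ≤ N := by exact_mod_cast hN
  have hpow : ((N : ℝ) ^ c) ^ e = ((N:ℝ) ^ e) ^ c := by
    rw [← Real.rpow_natCast, ← Real.rpow_natCast, ← Real.rpow_mul (by positivity), ← Real.rpow_mul (by positivity), mul_comm]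
  rw [hpow]
  split_ifs with h
  · have h1 : (2:ℝ) ^ e ≤ (N:ℝ) ^ e := Real.rpow_le_rpow (by norm_num) hN' he.le
    have h2 : ((2:ℝ) ^ e) ^ c ≤ ((N:ℝ) ^ e) ^ c := pow_le_pow_left₀ (by positivity) h1 c
    have h3 := one_add_mul_le_pow (a := (2:ℝ) ^ e - 1) (by linarith) c
    rw [add_sub_cancel] at h3
    calc (c + 1 : ℝ) ≤ (1 + 1 / (2 ^ e - 1)) * (1 + c * (2 ^ e - 1)) := by
          have : (1 + 1 / (2 ^ e - 1)) * (1 + c * (2 ^ e - 1)) = 1 + c + c * (2 ^ e - 1) + 1 / ((2:ℝ) ^ e - 1) := by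
            field_simp; ring
          rw [this]
          have : 0 ≤ 1 / ((2:ℝ) ^ e - 1) := by positivity
          have : 0 ≤ c * ((2:ℝ) ^ e - 1) := by positivity
          linarith
      _ ≤ _ := by
          have : 0 ≤ 1 + 1 / ((2:ℝ) ^ e - 1) := by positivity
          gcongr
          exact h3.trans h2
  · rw [one_mul]
    push Not at h
    have h1 : (2:ℝ) ^ (1 / e) ≤ N := Nat.ceil_le.1 h
    have h2 : (2:ℝ) ≤ (N:ℝ) ^ e := by
      have := Real.rpow_le_rpow (by positivity) h1 he.le
      rwa [← Real.rpow_mul (by norm_num), one_div_mul_cancel he.ne', Real.rpow_one] at this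
    have h3 : ((c + 1 : ℕ) : ℝ) ≤ 2 ^ c := by exact_mod_cast Nat.lt_two_pow_self
    push_cast at h3
    exact h3.trans (pow_le_pow_left₀ (by norm_num) h2 c)

open NumberField UniqueFactorizationMonoid in
lemma aux_count (d : ℕ) (ε : ℝ) (hε : 0 < ε) : ∃ C : ℝ, 0 < C ∧
    ∀ (K : Type) [Field K] [NumberField K], Module.finrank ℚ K ≤ d → ∀ M : ℕ, 1 ≤ M →
    {J : Ideal (𝓞 K) | J ∣ Ideal.span {(M : 𝓞 K)}}.Finite ∧
    (({J : Ideal (𝓞 K) | J ∣ Ideal.span {(M : 𝓞 K)}}.ncard : ℕ) : ℝ) ≤ C * (M : ℝ) ^ ε := by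
  classical
  obtain ⟨B, X, hB, hBX⟩ := aux_term (ε / (d + 1)) (by positivity)
  refine ⟨B ^ (d * X), by positivity, ?_⟩
  intro K _ _ hd M hM
  set I : Ideal (𝓞 K) := Ideal.span {(M : 𝓞 K)} with hI
  have hI0 : I ≠ 0 := by
    rw [hI, Ne, Ideal.zero_eq_bot, Ideal.span_singleton_eq_bot]
    exact_mod_cast (by omega : M ≠ 0)
  have hinj : Set.InjOn (fun J : Ideal (𝓞 K) => normalizedFactors J) {J | J ∣ I} := by
    intro J hJ J' hJ' h
    have h1 : J ≠ 0 := ne_zero_of_dvd_ne_zero hI0 hJ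
    have h2 : J' ≠ 0 := ne_zero_of_dvd_ne_zero hI0 hJ'
    exact associated_iff_eq.1 ((associated_iff_normalizedFactors_eq_normalizedFactors h1 h2).2 h)
  have hmaps : Set.MapsTo (fun J : Ideal (𝓞 K) => normalizedFactors J) {J | J ∣ I}
      (Finset.Iic (normalizedFactors I) : Finset (Multiset (Ideal (𝓞 K)))) := by
    intro J hJ
    rw [Finset.mem_coe, Finset.mem_Iic]
    exact (dvd_iff_normalizedFactors_le_normalizedFactors (ne_zero_of_dvd_ne_zero hI0 hJ) hI0).1 hJ
  have hfin : {J | J ∣ I}.Finite := Set.Finite.of_injOn hmaps hinj (Finset.finite_toSet _)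
  refine ⟨hfin, ?_⟩
  have hle := Set.ncard_le_ncard_of_injOn _ hmaps hinj (Finset.finite_toSet _)
  rw [Set.ncard_coe_finset, Multiset.card_Iic] at hle
  set s := normalizedFactors I with hs
  have hprime : ∀ P ∈ s.toFinset, P.IsPrime ∧ P ≠ ⊥ := by
    intro P hP
    have := prime_of_normalized_factor P (Multiset.mem_toFinset.1 hP)
    exact ⟨Ideal.isPrime_of_prime this, this.ne_zero⟩
  have hN2 : ∀ P ∈ s.toFinset, 2 ≤ Ideal.absNorm P := by
    intro P hP
    obtain ⟨h1, h2⟩ := hprime P hP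
    have h3 : Ideal.absNorm P ≠ 0 := by rwa [Ne, Ideal.absNorm_eq_zero_iff]
    have h4 : Ideal.absNorm P ≠ 1 := by
      rw [Ne, Ideal.absNorm_eq_one_iff]; exact h1.ne_top
    omega
  have hnorm : ∏ P ∈ s.toFinset, (Ideal.absNorm P) ^ (s.count P) = M ^ Module.finrank ℚ K := by
    rw [← RingOfIntegers.rank, ← Ideal.absNorm_span_natCast, ← hI]
    conv_rhs => rw [← associated_iff_eq.1 (prod_normalizedFactors hI0), map_multiset_prod]
    rw [Finset.prod_multiset_map_count]
  have h1 : ((∏ P ∈ s.toFinset, (s.count P + 1) : ℕ) : ℝ)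
      ≤ ∏ P ∈ s.toFinset, ((if Ideal.absNorm P < X then B else 1) *
          (((Ideal.absNorm P : ℕ) : ℝ) ^ (s.count P)) ^ (ε / (d + 1))) := by
    push_cast
    exact Finset.prod_le_prod (fun _ _ => by positivity) (fun P hP => hBX _ _ (hN2 P hP))
  rw [Finset.prod_mul_distrib, Finset.prod_ite, Finset.prod_const_one, mul_one, Finset.prod_const,
    Real.finsetProd_rpow _ _ (fun _ _ => by positivity)] at h1
  have h2 : (∏ P ∈ s.toFinset, ((Ideal.absNorm P : ℕ) : ℝ) ^ (s.count P)) = (M:ℝ) ^ Module.finrank ℚ K := by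
    exact_mod_cast hnorm
  rw [h2] at h1
  have hM' : (1:ℝ) ≤ M := by exact_mod_cast hM
  have h3 : ((M:ℝ) ^ Module.finrank ℚ K) ^ (ε / (d + 1)) ≤ (M:ℝ) ^ ε := by
    rw [← Real.rpow_natCast, ← Real.rpow_mul (by positivity)]
    apply Real.rpow_le_rpow_of_exponent_le hM'
    have : (Module.finrank ℚ K : ℝ) ≤ d + 1 := by
      have : (Module.finrank ℚ K : ℝ) ≤ d := by exact_mod_cast hd
      linarith
    rw [mul_div_assoc', div_le_iff₀ (by positivity), mul_comm]
    gcongr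
  have h4 := aux_small d X hd (s.toFinset.filter (fun P => Ideal.absNorm P < X)) (by
    intro P hP
    rw [Finset.mem_filter] at hP
    exact ⟨(hprime P hP.1).1, (hprime P hP.1).2, hP.2⟩)
  calc _ ≤ ((∏ P ∈ s.toFinset, (s.count P + 1) : ℕ) : ℝ) := by exact_mod_cast hle
    _ ≤ _ := h1
    _ ≤ _ := by gcongr
lemma aux_traceInt {A : Type} [DivisionRing A] [CharZero A] [FiniteDimensional ℚ A]
    (O : Subring A) (hO : IsOrder A O) (y : A) (hy : y ∈ O) :
    ∃ t : ℤ, LinearMap.trace ℚ A (LinearMap.mulLeft ℚ y) = t := by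
  classical
  let N : Submodule ℤ A := AddSubgroup.toIntSubmodule O.toAddSubgroup
  have hN : ∀ x, x ∈ N ↔ x ∈ O := fun x => Iff.rfl
  have hfg : N.FG := (AddSubgroup.toIntSubmodule O.toAddSubgroup).fg_iff_addSubgroup_fg.2 hO.1
  have : Module.Finite ℤ N := Module.Finite.iff_fg.2 hfg
  have : Module.IsTorsionFree ℤ A := inferInstance
  have : Module.Free ℤ N := inferInstance
  let b := Module.Free.chooseBasis ℤ N
  have hli : LinearIndependent ℤ (fun i => (b i : A)) :=
    b.linearIndependent.map' N.subtype (by simp)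
  have hliQ : LinearIndependent ℚ (fun i => (b i : A)) :=
    (LinearIndependent.iff_fractionRing ℤ ℚ).1 hli
  have hrep : ∀ x : N, (x : A) = ∑ i, ((b.repr x i : ℤ) : ℚ) • (b i : A) := by
    intro x
    have h3 := congrArg (fun x : N => (x : A)) (b.sum_repr x)
    simp only [AddSubmonoidClass.coe_finsetSum, Submodule.coe_smul] at h3
    refine h3.symm.trans (Finset.sum_congr rfl fun j _ => ?_)
    rw [Int.cast_smul_eq_zsmul ℚ]
  have hsp : ⊤ ≤ Submodule.span ℚ (Set.range (fun i => (b i : A))) := by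
    rw [← hO.2, Submodule.span_le]
    intro x hx
    have h2 := hrep ⟨x, hx⟩
    simp only at h2
    rw [SetLike.mem_coe, h2]
    exact Submodule.sum_mem _ fun i _ => Submodule.smul_mem _ _ (Submodule.subset_span ⟨i, rfl⟩)
  let bQ := Module.Basis.mk hliQ hsp
  have hb : ∀ i, bQ i = b i := fun i => by simp [bQ]
  refine ⟨∑ i, b.repr ⟨y * b i, O.mul_mem hy (b i).2⟩ i, ?_⟩
  rw [LinearMap.trace_eq_matrix_trace ℚ bQ, Matrix.trace]
  push_cast
  refine Finset.sum_congr rfl fun i _ => ?_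
  rw [Matrix.diag_apply, LinearMap.toMatrix_apply, LinearMap.mulLeft_apply, hb]
  have h2 : y * (b i : A) = ∑ j, ((b.repr ⟨y * b i, O.mul_mem hy (b i).2⟩ j : ℤ) : ℚ) • bQ j := by
    simp only [hb]
    exact hrep ⟨y * b i, O.mul_mem hy (b i).2⟩
  refine (congrArg (fun v => bQ.repr v i) h2).trans ?_
  rw [bQ.repr_sum_self]

lemma aux_disc {p : ℕ} {A : Type} [DivisionRing A] [CharZero A] 
    (ι : A →ₐ[ℚ] Matrix (Fin p) (Fin p) ℝ) (hp0 : 0 < p) (hfr : Module.finrank ℚ A = p ^ 2)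
    (O : Subring A) (D : ℕ) (hD : IsDisc ι O D) (hD0 : D ≠ 0) :
    ∃ (b : Module.Basis (Fin (p ^ 2)) ℚ A) 
      (b' : Module.Basis (Fin (p ^ 2)) ℝ (Matrix (Fin p) (Fin p) ℝ)),
      (∀ i, b' i = ι (b i)) ∧ (Matrix.of fun i j => (ι (b i * b j)).trace).det ≠ 0 := by
  have : ∃ x : Fin (p ^ 2) → A, (Matrix.of fun i j => (ι (x i * x j)).trace).det ≠ 0 := by
    by_contra hcon
    push Not at hcon
    apply hD0
    have : Ideal.span {(D : ℤ)} = ⊥ := by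
      rw [← hD, Ideal.span_eq_bot]
      rintro d ⟨x, -, hd⟩
      rw [hcon x] at hd
      exact_mod_cast hd
    simpa using this
  obtain ⟨x, hx⟩ := this
  have hR : LinearIndependent ℝ (fun i => ι (x i)) := by
    rw [Fintype.linearIndependent_iff]
    intro c hc
    have : c ᵥ* (Matrix.of fun i j => (ι (x i * x j)).trace) = 0 := by
      ext j
      have h2 := congrArg (fun M => (M * ι (x j)).trace) hc
      simpa [Matrix.vecMul, dotProduct, Finset.sum_mul, Matrix.trace_sum] using h2
    exact fun i => congrFun (Matrix.eq_zero_of_vecMul_eq_zero hx this) i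
  have hQ : LinearIndependent ℚ x := by
    rw [Fintype.linearIndependent_iff] at hR ⊢
    intro c hc i
    have h2 := congrArg ι hc
    rw [map_sum, map_zero] at h2
    have := hR (fun i => (c i : ℝ)) (by
      rw [← h2]
      refine Finset.sum_congr rfl fun k _ => ?_
      rw [map_smul]
      ext; simp [Rat.smul_def]) i
    exact_mod_cast this
  have hp : Nonempty (Fin (p ^ 2)) := by
    exact ⟨⟨0, by positivity⟩⟩
  refine ⟨basisOfLinearIndependentOfCardEqFinrank hQ (by simp [hfr]),
    basisOfLinearIndependentOfCardEqFinrank hR (by simp [Module.finrank_matrix, sq]), ?_, ?_⟩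
  · intro i; simp
  · simpa using hx

lemma aux_gram {p : ℕ} {A : Type} [DivisionRing A] [CharZero A] 
    (ι : A →ₐ[ℚ] Matrix (Fin p) (Fin p) ℝ) (b w : Module.Basis (Fin (p ^ 2)) ℚ A)
    (h : (Matrix.of fun i j => (ι (b i * b j)).trace).det ≠ 0) :
    (Matrix.of fun i j => (ι (w i * w j)).trace).det ≠ 0 := by
  set P : Matrix (Fin (p ^ 2)) (Fin (p ^ 2)) ℝ := (b.toMatrix w).map (algebraMap ℚ ℝ) with hP
  have hPdet : P.det ≠ 0 := by
    have h1 : (b.toMatrix w) * (w.toMatrix b) = 1 := b.toMatrix_mul_toMatrix_flip w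
    have h2 : (b.toMatrix w).det ≠ 0 := by
      intro h0
      have := congrArg Matrix.det h1
      rw [Matrix.det_mul, h0] at this
      simp at this
    rw [hP, ← RingHom.mapMatrix_apply, ← RingHom.map_det]
    simpa using h2
  have hw : ∀ j, ι (w j) = ∑ k, P k j • ι (b k) := by
    intro j
    conv_lhs => rw [← b.sum_toMatrix_smul_self w j, map_sum]
    refine Finset.sum_congr rfl fun k _ => ?_
    rw [map_smul]
    ext; simp [hP, Rat.smul_def]
  have : (Matrix.of fun i j => (ι (w i * w j)).trace)
      = Pᵀ * (Matrix.of fun i j => (ι (b i * b j)).trace) * P := by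
    ext i j
    simp only [Matrix.of_apply, map_mul, hw, Matrix.mul_apply, Matrix.transpose_apply,
      Finset.sum_mul, Finset.mul_sum, Matrix.trace_sum, Matrix.smul_mul, Matrix.mul_smul, Matrix.trace_smul, smul_eq_mul]
    refine Finset.sum_congr rfl fun k _ => Finset.sum_congr rfl fun l _ => ?_
    ring
  rw [this, Matrix.det_mul, Matrix.det_mul, Matrix.det_transpose]
  exact mul_ne_zero (mul_ne_zero hPdet h) hPdet
lemma aux_chain {A : Type} [DivisionRing A] [CharZero A] [FiniteDimensional ℚ A]
    (s : Set A) (V : Submodule ℚ A) (hV : V ≤ (Algebra.adjoin ℚ s).toSubmodule)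
    (h1 : (1 : A) ∈ V) (d n : ℕ) (hn : 1 ≤ n)
    (hd : ∀ k, d ∣ Module.finrank ℚ ↥(V * (Submodule.span ℚ (insert 1 s)) ^ k))
    (hd0 : d ≤ Module.finrank ℚ V)
    (hT : Module.finrank ℚ (Algebra.adjoin ℚ s) = d * n) :
    V * (Submodule.span ℚ (insert 1 s)) ^ (n - 1) = (Algebra.adjoin ℚ s).toSubmodule := by
  set M := Submodule.span ℚ (insert 1 s) with hM
  set T := (Algebra.adjoin ℚ s).toSubmodule with hTdef
  have hMT : M ≤ T := by
    rw [hM, Submodule.span_le]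
    intro x hx
    rcases hx with rfl | hx
    · exact one_mem (Algebra.adjoin ℚ s)
    · exact Algebra.subset_adjoin hx
  have hTT : T * T = T := (Algebra.adjoin ℚ s).isIdempotentElem_toSubmodule
  have hle : ∀ k, V * M ^ k ≤ T := by
    intro k
    induction k with
    | zero => simpa using hV
    | succ k ih =>
      rw [pow_succ, ← mul_assoc, ← hTT]
      exact mul_le_mul' ih hMT
  have h1M : (1 : A) ∈ M := Submodule.subset_span (Set.mem_insert _ _)
  have h1k : ∀ k, (1 : A) ∈ V * M ^ k := by
    intro k
    induction k with
    | zero => simpa using h1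
    | succ k ih =>
      rw [pow_succ, ← mul_assoc]
      simpa using Submodule.mul_mem_mul ih h1M
  have hmono : ∀ k, V * M ^ k ≤ V * M ^ (k + 1) := by
    intro k x hx
    rw [pow_succ, ← mul_assoc]
    simpa using Submodule.mul_mem_mul hx h1M
  have key : ∀ k, d * (k + 1) ≤ Module.finrank ℚ ↥(V * M ^ k) ∨ T ≤ V * M ^ k := by
    intro k
    induction k with
    | zero => left; rw [pow_zero, mul_one, zero_add, mul_one]; exact hd0
    | succ k ih =>
      rcases ih with ih | ih
      · by_cases heq : V * M ^ k = V * M ^ (k + 1)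
        · right
          rw [← heq]
          have hst : ∀ u ∈ V * M ^ k, ∀ a ∈ M, u * a ∈ V * M ^ k := by
            intro u hu a ha
            rw [heq, pow_succ, ← mul_assoc]
            exact Submodule.mul_mem_mul hu ha
          have hst2 : ∀ b ∈ Algebra.adjoin ℚ s, ∀ u ∈ V * M ^ k, u * b ∈ V * M ^ k := by
            intro b hb
            induction hb using Algebra.adjoin_induction with
            | mem x hx => exact fun u hu => hst u hu x (Submodule.subset_span (Set.mem_insert_of_mem _ hx))
            | algebraMap r =>
              intro u hu
              rw [← Algebra.commutes, ← Algebra.smul_def]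
              exact Submodule.smul_mem _ _ hu
            | add x y _ _ hx hy => 
              intro u hu
              rw [mul_add]; exact Submodule.add_mem _ (hx u hu) (hy u hu)
            | mul x y _ _ hx hy =>
              intro u hu
              rw [← mul_assoc]; exact hy _ (hx u hu)
          intro b hb
          simpa using hst2 b hb 1 (h1k k)
        · left
          have hlt := Submodule.finrank_lt_finrank_of_lt (lt_of_le_of_ne (hmono k) heq)
          obtain ⟨x, hx⟩ := hd k
          obtain ⟨y, hy⟩ := hd (k + 1)
          rw [hx] at ih hlt
          rw [hy] at hlt ⊢
          have hd0 : 0 < d := by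
            rcases Nat.eq_zero_or_pos d with h | h
            · subst h; simp at hlt
            · exact h
          have h3 : k + 1 ≤ x := Nat.le_of_mul_le_mul_left ih hd0
          have h4 : x < y := Nat.lt_of_mul_lt_mul_left hlt
          exact Nat.mul_le_mul_left d (by omega)
      · right; exact ih.trans (hmono k)
  rcases key (n - 1) with h | h
  · rw [Nat.sub_add_cancel hn, ← hT] at h
    exact Submodule.eq_of_le_of_finrank_le (hle _) h
  · exact le_antisymm (hle _) h

lemma aux_span {p : ℕ} (hp : p.Prime) {A : Type} [DivisionRing A] [CharZero A]
    (hfr : Module.finrank ℚ A = p ^ 2) (α β : A) (hne : α * β ≠ β * α) :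
    (Submodule.span ℚ {1, α, β}) ^ (2 * (p - 1)) = (⊤ : Submodule ℚ A) := by
  have : FiniteDimensional ℚ A := FiniteDimensional.of_finrank_pos (by rw [hfr]; exact pow_pos hp.pos 2)
  have hdiv : ∀ B : Subalgebra ℚ A, Module.finrank ℚ B = 1 ∨ Module.finrank ℚ B = p ∨ Module.finrank ℚ B = p ^ 2 := by
    intro B
    have h := aux_dvd B ⊤ (fun _ _ _ _ => trivial)
    rw [finrank_top, hfr] at h
    obtain ⟨k, hk, h⟩ := (Nat.dvd_prime_pow hp).1 h
    interval_cases k <;> simp_all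
  set E := Algebra.adjoin ℚ {α} with hE
  set B := Algebra.adjoin ℚ {α, β} with hB
  have hαE : α ∈ E := Algebra.subset_adjoin rfl
  have hcomm : ∀ x ∈ E, α * x = x * α := by
    intro x hx
    have : E ≤ Subalgebra.centralizer ℚ {α} := Algebra.adjoin_le (by
      intro y hy; rw [Set.mem_singleton_iff] at hy; subst hy
      rw [SetLike.mem_coe, Subalgebra.mem_centralizer_iff]; simp)
    have := Subalgebra.mem_centralizer_iff ℚ |>.1 (this hx)
    exact this α rfl
  have hβE : β ∉ E := fun h => hne (hcomm β h)
  have hE1 : Module.finrank ℚ E ≠ 1 := by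
    intro h
    rw [Subalgebra.finrank_eq_one_iff] at h
    rw [h] at hαE
    obtain ⟨q, rfl⟩ := Algebra.mem_bot.1 hαE
    exact hne (Algebra.commutes q β)
  have hEB : E ≤ B := Algebra.adjoin_mono (by simp)
  have hlt : Module.finrank ℚ E < Module.finrank ℚ B := by
    refine Submodule.finrank_lt_finrank_of_lt (s := E.toSubmodule) (t := B.toSubmodule) ?_
    refine lt_of_le_of_ne hEB ?_
    intro h
    exact hβE (show β ∈ E.toSubmodule from h ▸ (Algebra.subset_adjoin (by simp) : β ∈ B))
  have hBle : Module.finrank ℚ B ≤ p ^ 2 := by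
    rw [← hfr]; exact Submodule.finrank_le B.toSubmodule
  have hp2 := hp.two_le
  have hEp : Module.finrank ℚ E = p := by
    rcases hdiv E with h | h | h
    · exact absurd h hE1
    · exact h
    · omega
  have hBp : Module.finrank ℚ B = p * p := by
    rcases hdiv B with h | h | h
    · omega
    · omega
    · rw [h, sq]
  have hBtop : B.toSubmodule = ⊤ := by
    apply Submodule.eq_top_of_finrank_eq
    rw [hfr, sq]; exact hBp
  have c1 := aux_chain {α} 1 (by
      rw [Submodule.one_le]; exact one_mem E) (Submodule.one_le.1 le_rfl) 1 p hp.one_le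
      (fun k => one_dvd _) (by
        rw [Nat.one_le_iff_ne_zero, Ne, Submodule.finrank_eq_zero]
        exact one_ne_zero) (by rw [one_mul]; exact hEp)
  have c2 := aux_chain {α, β} E.toSubmodule hEB (one_mem E) p p hp.one_le (fun k => by
      have := aux_dvd E (E.toSubmodule * (Submodule.span ℚ (insert 1 {α, β})) ^ k) (by
        intro b hb u hu
        have h := Submodule.mul_mem_mul (show b ∈ E.toSubmodule from hb) hu
        rwa [← mul_assoc, E.isIdempotentElem_toSubmodule.eq] at h)
      rwa [hEp] at this) hEp.ge hBp
  rw [one_mul] at c1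
  have hle : E.toSubmodule ≤ (Submodule.span ℚ {1, α, β}) ^ (p - 1) := by
    rw [← c1]
    exact pow_le_pow_left' (Submodule.span_mono (by intro x hx; simp at hx ⊢; tauto)) _
  rw [eq_top_iff, ← hBtop, ← c2, two_mul, pow_add]
  exact mul_le_mul' hle le_rfl

lemma aux_tr_base {p : ℕ} {A : Type} [DivisionRing A] [CharZero A]
    (ι : A →ₐ[ℚ] Matrix (Fin p) (Fin p) ℝ) (b : Module.Basis (Fin (p ^ 2)) ℚ A)
    (b' : Module.Basis (Fin (p ^ 2)) ℝ (Matrix (Fin p) (Fin p) ℝ)) (h : ∀ i, b' i = ι (b i)) (a : A) :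
    (p : ℝ) * (ι a).trace = ((LinearMap.trace ℚ A (LinearMap.mulLeft ℚ a) : ℚ) : ℝ) := by
  rw [← aux_trace, LinearMap.trace_eq_matrix_trace ℝ b', LinearMap.trace_eq_matrix_trace ℚ b,
    Algebra.toMatrix_lmul_eq, Algebra.toMatrix_lmul_eq, aux_base ι b b' h]
  simp [Matrix.trace]

lemma aux_norm_base {p : ℕ} {A : Type} [DivisionRing A] [CharZero A]
    (ι : A →ₐ[ℚ] Matrix (Fin p) (Fin p) ℝ) (b : Module.Basis (Fin (p ^ 2)) ℚ A)
    (b' : Module.Basis (Fin (p ^ 2)) ℝ (Matrix (Fin p) (Fin p) ℝ)) (h : ∀ i, b' i = ι (b i)) (a : A) :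
    (ι a).det ^ p = ((Algebra.norm ℚ a : ℚ) : ℝ) := by
  rw [← aux_norm, Algebra.norm_eq_matrix_det b', Algebra.norm_eq_matrix_det b, aux_base ι b b' h,
    ← RingHom.mapMatrix_apply, ← RingHom.map_det]
  simp

lemma aux_entry {p : ℕ} {A : Type} [DivisionRing A] [CharZero A]
    (ι : A →ₐ[ℚ] Matrix (Fin p) (Fin p) ℝ) (O : Subring A)
    (z : Matrix.GeneralLinearGroup (Fin p) ℝ) (m : ℕ) (δ : ℝ) (hδ : δ ≤ 1) (γ : A)
    (h : γ ∈ OSet ι O z m δ) (i j : Fin p) :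
    |(((m : ℝ) ^ (-(1 : ℝ) / (p : ℝ))) •
        ((↑z⁻¹ : Matrix (Fin p) (Fin p) ℝ) * ι γ * (↑z : Matrix (Fin p) (Fin p) ℝ))) i j| < 2 := by
  obtain ⟨-, -, k, ⟨hk, -⟩, hkd⟩ := h
  have h1 := hkd i j
  have h2 : |k i j| ≤ 1 := by
    have h3 : (kᵀ * k) j j = 1 := by rw [hk]; simp
    rw [Matrix.mul_apply] at h3
    have h4 := Finset.single_le_sum (f := fun l => kᵀ j l * k l j) (s := Finset.univ)
      (fun l _ => by simpa [Matrix.transpose_apply] using mul_self_nonneg (k l j)) (Finset.mem_univ i)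
    rw [h3] at h4
    simp only [Matrix.transpose_apply] at h4
    rw [abs_le_one_iff_mul_self_le_one]; exact h4
  rw [Matrix.sub_apply] at h1
  have h5 := abs_sub_abs_le_abs_sub ((((m : ℝ) ^ (-(1 : ℝ) / (p : ℝ))) •
        ((↑z⁻¹ : Matrix (Fin p) (Fin p) ℝ) * ι γ * (↑z : Matrix (Fin p) (Fin p) ℝ))) i j) (k i j)
  linarith

open scoped Pointwise in
lemma aux_words {p : ℕ} {A : Type} [DivisionRing A] [CharZero A]
    (ι : A →ₐ[ℚ] Matrix (Fin p) (Fin p) ℝ) (O : Subring A)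
    (z : Matrix.GeneralLinearGroup (Fin p) ℝ) (y : ℝ) (hy : 0 ≤ y) (T : Set A)
    (hT : ∀ t ∈ T, t ∈ O ∧ ∀ i j, |((↑z⁻¹ : Matrix (Fin p) (Fin p) ℝ) * ι t * (↑z : Matrix (Fin p) (Fin p) ℝ)) i j| ≤ y)
    (n : ℕ) : ∀ w ∈ T ^ n, w ∈ O ∧ ∀ i j,
      |((↑z⁻¹ : Matrix (Fin p) (Fin p) ℝ) * ι w * (↑z : Matrix (Fin p) (Fin p) ℝ)) i j| ≤ (p * y) ^ n := by
  have hzz : (↑z : Matrix (Fin p) (Fin p) ℝ) * (↑z⁻¹ : Matrix (Fin p) (Fin p) ℝ) = 1 := z.mul_inv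
  have hzz' : (↑z⁻¹ : Matrix (Fin p) (Fin p) ℝ) * (↑z : Matrix (Fin p) (Fin p) ℝ) = 1 := z.inv_mul
  induction n with
  | zero =>
    intro w hw
    rw [pow_zero, Set.mem_one] at hw
    subst hw
    refine ⟨O.one_mem, fun i j => ?_⟩
    rw [map_one, mul_one, hzz', Matrix.one_apply]
    split_ifs <;> simp
  | succ n ih =>
    intro w hw
    rw [pow_succ] at hw
    obtain ⟨u, hu, v, hv, rfl⟩ := Set.mem_mul.1 hw
    obtain ⟨hu1, hu2⟩ := ih u hu
    obtain ⟨hv1, hv2⟩ := hT v hv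
    refine ⟨O.mul_mem hu1 hv1, fun i j => ?_⟩
    have : (↑z⁻¹ : Matrix (Fin p) (Fin p) ℝ) * ι (u * v) * (↑z : Matrix (Fin p) (Fin p) ℝ)
      = ((↑z⁻¹ : Matrix (Fin p) (Fin p) ℝ) * ι u * (↑z : Matrix (Fin p) (Fin p) ℝ)) *
        ((↑z⁻¹ : Matrix (Fin p) (Fin p) ℝ) * ι v * (↑z : Matrix (Fin p) (Fin p) ℝ)) := by
      rw [map_mul]
      calc _ = (↑z⁻¹ : Matrix (Fin p) (Fin p) ℝ) * ι u * 1 * ι v * (↑z : Matrix (Fin p) (Fin p) ℝ) := by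
            rw [mul_one]; simp only [mul_assoc]
        _ = _ := by rw [← hzz]; simp only [mul_assoc]
    rw [this, Matrix.mul_apply]
    refine (Finset.abs_sum_le_sum_abs _ _).trans ?_
    calc _ ≤ ∑ _k : Fin p, (p * y) ^ n * y := by
          refine Finset.sum_le_sum fun k _ => ?_
          rw [abs_mul]
          exact mul_le_mul (hu2 i k) (hv2 k j) (abs_nonneg _) (by positivity)
      _ = _ := by simp; ring

open scoped Pointwise in
lemma aux_noncomm {p : ℕ} (hp : p.Prime) {A : Type} [DivisionRing A] [CharZero A]
    (ι : A →ₐ[ℚ] Matrix (Fin p) (Fin p) ℝ) (hfr : Module.finrank ℚ A = p ^ 2)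
    (O : Subring A) (hO : IsOrder A O) (D : ℕ) (hD : IsDisc ι O D) (hD0 : D ≠ 0)
    (z : Matrix.GeneralLinearGroup (Fin p) ℝ) (m : ℕ) (hm : 1 ≤ m) (δ : ℝ) (hδ : δ ≤ 1) (α β : A)
    (hα : α ∈ OSet ι O z m δ) (hβ : β ∈ OSet ι O z m δ) (hne : α * β ≠ β * α) :
    (D : ℝ) ≤ ((p ^ 2).factorial * (p ^ 3 * (p * 2) ^ (2 * (p - 1) + 2 * (p - 1))) ^ (p ^ 2)) *
      (m : ℝ) ^ (4 * p * (p - 1)) := by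
  classical
  have : FiniteDimensional ℚ A := FiniteDimensional.of_finrank_pos (by rw [hfr]; exact pow_pos hp.pos 2)
  obtain ⟨b, b', hb, hbd⟩ := aux_disc ι hp.pos hfr O D hD hD0
  have hp0 : (0:ℝ) < p := by exact_mod_cast hp.pos
  have hm' : (1:ℝ) ≤ m := by exact_mod_cast hm
  set y : ℝ := (m:ℝ) ^ ((1:ℝ) / p) with hy
  have hy1 : 1 ≤ y := Real.one_le_rpow hm' (by positivity)
  have hyp : y ^ p = m := by
    rw [hy, ← Real.rpow_natCast, ← Real.rpow_mul (by positivity), one_div_mul_cancel hp0.ne', Real.rpow_one]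
  have hyinv : (m : ℝ) ^ (-(1 : ℝ) / (p : ℝ)) = y⁻¹ := by
    rw [hy, neg_div, Real.rpow_neg (by positivity)]
  have hgen : ∀ γ ∈ OSet ι O z m δ, γ ∈ O ∧ ∀ i j, |((↑z⁻¹ : Matrix (Fin p) (Fin p) ℝ) * ι γ * (↑z : Matrix (Fin p) (Fin p) ℝ)) i j| ≤ 2 * y := by
    intro γ hγ
    refine ⟨hγ.1, fun i j => ?_⟩
    have := aux_entry ι O z m δ hδ γ hγ i j
    rw [hyinv, Matrix.smul_apply, smul_eq_mul, abs_mul, abs_of_pos (by positivity), inv_mul_lt_iff₀ (by positivity)] at this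
    linarith
  have hT : ∀ t ∈ ({1, α, β} : Set A), t ∈ O ∧ ∀ i j, |((↑z⁻¹ : Matrix (Fin p) (Fin p) ℝ) * ι t * (↑z : Matrix (Fin p) (Fin p) ℝ)) i j| ≤ 2 * y := by
    intro t ht
    rcases ht with rfl | rfl | rfl
    · refine ⟨O.one_mem, fun i j => ?_⟩
      have hzz' : (↑z⁻¹ : Matrix (Fin p) (Fin p) ℝ) * (↑z : Matrix (Fin p) (Fin p) ℝ) = 1 := z.inv_mul
      rw [map_one, mul_one, hzz', Matrix.one_apply]
      split_ifs <;> simp <;> linarith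
    · exact hgen _ hα
    · exact hgen _ hβ
  have hspan := aux_span hp hfr α β hne
  rw [Submodule.span_pow] at hspan
  set n := 2 * (p - 1) with hn
  let w0 := Module.Basis.ofSpan hspan.ge
  have hw0 : ∀ i, w0 i ∈ ({1, α, β} : Set A) ^ n := fun i =>
    Module.Basis.ofSpan_subset hspan.ge ⟨i, rfl⟩
  let w : Module.Basis (Fin (p ^ 2)) ℚ A := by
    refine w0.reindex ?_
    have := Module.Basis.indexEquiv b w0
    exact this.symm
  have hw : ∀ i, w i ∈ ({1, α, β} : Set A) ^ n := by
    intro i; simp only [w, Module.Basis.reindex_apply]; exact hw0 _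
  have hword := aux_words ι O z (2 * y) (by positivity) _ hT
  have hg := aux_gram ι b w hbd
  have hwO : ∀ i, w i ∈ O := fun i => (hword n _ (hw i)).1
  choose t ht using fun i j => aux_traceInt O hO (w i * w j) (O.mul_mem (hwO i) (hwO j))
  have ht' : ∀ i j, (p : ℝ) * (ι (w i * w j)).trace = t i j := by
    intro i j
    rw [aux_tr_base ι b b' hb, ht]; simp
  set d : ℤ := (Matrix.of fun i j => (p : ℤ) * t i j).det with hd
  have hdR : (d : ℝ) = (Matrix.of fun i j => (p : ℝ) * ((p : ℝ) * (ι (w i * w j)).trace)).det := by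
    rw [hd]
    have := (Int.castRingHom ℝ).map_det (Matrix.of fun i j => (p : ℤ) * t i j)
    rw [eq_intCast] at this
    rw [this]
    congr 1
    ext i j
    simp [ht', -map_mul]
  have hmem : D ∣ d.natAbs := by
    have : d ∈ Ideal.span {(D : ℤ)} := by
      rw [← hD]
      refine Ideal.subset_span ⟨fun i => (p : A) * w i, fun i => O.mul_mem (natCast_mem O p) (hwO i), ?_⟩
      rw [hdR]
      congr 1
      ext i j
      have : (p : A) * w i * ((p : A) * w j) = (p:ℚ) • ((p:ℚ) • (w i * w j)) := by
        rw [Rat.smul_def, Rat.smul_def]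
        simp only [Rat.cast_natCast]
        rw [mul_assoc, ← mul_assoc (w i), ← (Nat.cast_commute p (w i)).eq, mul_assoc]
      simp only [Matrix.of_apply]
      rw [this, map_smul, map_smul, Matrix.trace_smul, Matrix.trace_smul, Rat.smul_def, Rat.smul_def]
      simp
    rw [Ideal.mem_span_singleton] at this
    exact Int.natCast_dvd.1 this
  have hdne : d ≠ 0 := by
    intro h0
    rw [h0] at hdR
    have : (Matrix.of fun i j => (p : ℝ) * ((p : ℝ) * (ι (w i * w j)).trace))
      = ((p:ℝ) * p) • (Matrix.of fun i j => (ι (w i * w j)).trace) := by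
      ext i j; simp [mul_assoc]
    rw [this, Matrix.det_smul] at hdR
    have h3 : ((p:ℝ) * p) ^ Fintype.card (Fin (p ^ 2)) ≠ 0 := by positivity
    exact mul_ne_zero h3 hg (by exact_mod_cast hdR.symm)
  have hDd : (D : ℝ) ≤ |(d : ℝ)| := by
    have := Nat.le_of_dvd (Int.natAbs_pos.2 hdne) hmem
    rw [← Int.cast_abs, Int.abs_eq_natAbs]
    exact_mod_cast this
  have htr : ∀ i j, |(ι (w i * w j)).trace| ≤ p * (p * (2 * y)) ^ (n + n) := by
    intro i j
    have h1 := (hword (n + n) (w i * w j) (by rw [pow_add]; exact Set.mul_mem_mul (hw i) (hw j))).2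
    have h2 : (ι (w i * w j)).trace = ((↑z⁻¹ : Matrix (Fin p) (Fin p) ℝ) * ι (w i * w j) * (↑z : Matrix (Fin p) (Fin p) ℝ)).trace := by
      rw [Matrix.trace_mul_cycle]
      have hzz : (↑z : Matrix (Fin p) (Fin p) ℝ) * (↑z⁻¹ : Matrix (Fin p) (Fin p) ℝ) = 1 := z.mul_inv
      rw [hzz, one_mul]
    rw [h2, Matrix.trace]
    refine (Finset.abs_sum_le_sum_abs _ _).trans ?_
    calc _ ≤ ∑ _k : Fin p, (p * (2 * y)) ^ (n + n) := Finset.sum_le_sum fun k _ => h1 k k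
      _ = _ := by simp
  have hdet := Matrix.det_le (A := (Matrix.of fun i j => (p : ℝ) * ((p : ℝ) * (ι (w i * w j)).trace)))
    (abv := AbsoluteValue.abs) (x := (p:ℝ) * (p * (p * (p * (2 * y)) ^ (n + n)))) (by
      intro i j
      simp only [Matrix.of_apply, AbsoluteValue.abs_apply, abs_mul, Nat.abs_cast]
      gcongr
      exact htr i j)
  rw [← hdR, AbsoluteValue.abs_apply, Fintype.card_fin, nsmul_eq_mul] at hdet
  refine hDd.trans (hdet.trans (le_of_eq ?_))
  have e1 : (p:ℝ) * (p * (p * (p * (2 * y)) ^ (n + n))) = p ^ 3 * (p * 2) ^ (n + n) * y ^ (n + n) := by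
    rw [← mul_assoc (p:ℝ) 2 y, mul_pow]; ring
  rw [e1, mul_pow _ (y ^ _), ← pow_mul, ← hyp, ← pow_mul, ← mul_assoc]
  congr 2
  rw [hn]; ring

lemma aux_comm {p : ℕ} (hp : p.Prime) (ε : ℝ) (hε : 0 < ε) : ∃ C : ℝ, 0 < C ∧
    ∀ (A : Type) [DivisionRing A] [CharZero A]
    (ι : A →ₐ[ℚ] Matrix (Fin p) (Fin p) ℝ) (_ : Module.finrank ℚ A = p ^ 2)
    (O : Subring A) (_ : IsOrder A O) (D : ℕ) (_ : IsDisc ι O D) (_ : D ≠ 0)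
    (z : Matrix.GeneralLinearGroup (Fin p) ℝ) (m : ℕ) (_ : 1 ≤ m) (δ : ℝ) (_ : δ ≤ 1)
    (_ : ∀ α ∈ OSet ι O z m δ, ∀ β ∈ OSet ι O z m δ, α * β = β * α),
    (OSet ι O z m δ).Finite ∧ ((OSet ι O z m δ).ncard : ℝ) ≤ C * (m : ℝ) ^ ε := by
  classical
  have hp0 : (0:ℝ) < p := by exact_mod_cast hp.pos
  obtain ⟨C0, hC0, hcount⟩ := aux_count (p ^ 2) (ε / p) (by positivity)
  let L : ℕ := p.factorial + 1
  let F : Finset (Fin p × Fin p → ℤ) := Fintype.piFinset fun _ => Finset.Icc (-(2 * L : ℤ)) (2 * L)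
  refine ⟨(F.card + 1) * C0, by positivity, ?_⟩
  intro A _ _ ι hfr O hO D hD hD0 z m hm δ hδ hcomm
  have : FiniteDimensional ℚ A := FiniteDimensional.of_finrank_pos (by rw [hfr]; exact pow_pos hp.pos 2)
  obtain ⟨b, b', hb, hbd⟩ := aux_disc ι hp.pos hfr O D hD hD0
  have hm' : (1:ℝ) ≤ m := by exact_mod_cast hm
  obtain ⟨K, iF, iN, f, hf⟩ := aux_field (OSet ι O z m δ) hcomm
  have hK : Module.finrank ℚ K ≤ p ^ 2 := by
    rw [← hfr]
    exact LinearMap.finrank_le_finrank_of_injective (f := f.toLinearMap) f.injective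
  have hint : ∀ γ ∈ O, IsIntegral ℤ γ := by
    intro γ hγ
    refine IsIntegral.of_mem_of_fg (subalgebraOfSubring O) ?_ γ hγ
    exact (Submodule.fg_iff_addSubgroup_fg _).2 hO.1
  have hg : ∀ γ : A, ∃ g : NumberField.RingOfIntegers K, γ ∈ OSet ι O z m δ → f g = γ := by
    intro γ
    by_cases hγ : γ ∈ OSet ι O z m δ
    · obtain ⟨k, hk⟩ := hf γ hγ
      have h1 : IsIntegral ℤ k := by
        have := hint γ hγ.1
        rw [← hk] at this
        exact (isIntegral_algHom_iff (f.restrictScalars ℤ) f.injective).1 this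
      exact ⟨⟨k, h1⟩, fun _ => hk⟩
    · exact ⟨0, fun h => absurd h hγ⟩
  choose g hg using hg
  let R : A → Matrix (Fin p) (Fin p) ℝ := fun γ => ((m : ℝ) ^ (-(1 : ℝ) / (p : ℝ))) •
        ((↑z⁻¹ : Matrix (Fin p) (Fin p) ℝ) * ι γ * (↑z : Matrix (Fin p) (Fin p) ℝ))
  let Φ : A → (Fin p × Fin p → ℤ) × Ideal (NumberField.RingOfIntegers K) := fun γ =>
    (fun ij => ⌊(L : ℝ) * R γ ij.1 ij.2⌋, Ideal.span {g γ})
  obtain ⟨hJf, hJc⟩ := hcount K hK (m ^ p) (Nat.one_le_pow _ _ hm)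
  set J := {J : Ideal (NumberField.RingOfIntegers K) | J ∣ Ideal.span {((m ^ p : ℕ) : NumberField.RingOfIntegers K)}} with hJ
  have hLpos : (0:ℝ) < L := by simp only [L]; positivity
  have hmaps : Set.MapsTo Φ (OSet ι O z m δ) ((F : Set _) ×ˢ J) := by
    intro γ hγ
    refine ⟨?_, ?_⟩
    · simp only [Φ, F, Finset.mem_coe, Fintype.mem_piFinset, Finset.mem_Icc]
      intro ij
      have := aux_entry ι O z m δ hδ γ hγ ij.1 ij.2
      change |R γ ij.1 ij.2| < 2 at this
      rw [abs_lt] at this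
      constructor
      · rw [Int.le_floor]; push_cast; nlinarith
      · have h1 : ((⌊(L : ℝ) * R γ ij.1 ij.2⌋ : ℤ) : ℝ) ≤ (2 * L : ℤ) := by
          refine (Int.floor_le _).trans ?_
          push_cast; nlinarith
        exact_mod_cast h1
    · refine aux_dvdM f (g γ) (m ^ p) ?_
      rw [hg γ hγ]
      have h := aux_norm_base ι b b' hb γ
      rw [hγ.2.1] at h
      exact_mod_cast h.symm
  have hinj : Set.InjOn Φ (OSet ι O z m δ) := by
    intro γ hγ γ' hγ' hΦ
    simp only [Φ, Prod.mk.injEq] at hΦ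
    obtain ⟨h1, h2⟩ := hΦ
    rw [Ideal.span_singleton_eq_span_singleton] at h2
    obtain ⟨u, hu⟩ := h2
    by_contra hne
    set v : NumberField.RingOfIntegers K := (u : NumberField.RingOfIntegers K) - 1 with hv
    have hdiff : γ' - γ = γ * f v := by
      have : f ((g γ * u : NumberField.RingOfIntegers K) : K) = γ' := by rw [hu]; exact hg γ' hγ'
      rw [← this, hv]
      push_cast
      simp only [map_mul, map_sub, map_one]
      rw [hg γ hγ, mul_sub, mul_one]
    have hv0 : v ≠ 0 := by
      intro h0
      rw [h0] at hdiff
      apply hne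
      have : γ' - γ = 0 := by rw [hdiff]; simp
      exact (sub_eq_zero.1 this).symm
    have hn1 := aux_int f v hv0
    have hn2 := aux_norm_base ι b b' hb (f v)
    have hdet1 : 1 ≤ |(ι (f v)).det| := by
      by_contra hlt
      push Not at hlt
      have h3 : |(ι (f v)).det| ^ p < 1 := pow_lt_one₀ (abs_nonneg _) hlt hp.ne_zero
      rw [← abs_pow, hn2] at h3
      have : |(Algebra.norm ℚ (f v))| < 1 := by exact_mod_cast h3
      linarith
    have hΔ : R γ' - R γ = ((m : ℝ) ^ (-(1 : ℝ) / (p : ℝ))) •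
        ((↑z⁻¹ : Matrix (Fin p) (Fin p) ℝ) * (ι γ * ι (f v)) * (↑z : Matrix (Fin p) (Fin p) ℝ)) := by
      rw [← map_mul, ← hdiff, map_sub, mul_sub, sub_mul, smul_sub]
    have hzdet : (↑z⁻¹ : Matrix (Fin p) (Fin p) ℝ).det * (↑z : Matrix (Fin p) (Fin p) ℝ).det = 1 := by
      have hzz' : (↑z⁻¹ : Matrix (Fin p) (Fin p) ℝ) * (↑z : Matrix (Fin p) (Fin p) ℝ) = 1 := z.inv_mul
      rw [← Matrix.det_mul, hzz', Matrix.det_one]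
    have hΔdet : (R γ' - R γ).det = (ι (f v)).det := by
      rw [hΔ, Matrix.det_smul, Matrix.det_mul, Matrix.det_mul, Matrix.det_mul, hγ.2.1, Fintype.card_fin,
        ← Real.rpow_natCast, ← Real.rpow_mul (by positivity), div_mul_cancel₀ _ hp0.ne', Real.rpow_neg_one]
      calc _ = ((m:ℝ)⁻¹ * m) * ((↑z⁻¹ : Matrix (Fin p) (Fin p) ℝ).det * (↑z : Matrix (Fin p) (Fin p) ℝ).det) * (ι (f v)).det := by ring
        _ = _ := by rw [hzdet, inv_mul_cancel₀ (by positivity)]; ring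
    have hent : ∀ i j, AbsoluteValue.abs ((R γ' - R γ) i j) ≤ 1 / (L:ℝ) := by
      intro i j
      have h3 := Int.abs_sub_lt_one_of_floor_eq_floor (congrFun h1 (i, j)).symm
      simp only at h3
      rw [← mul_sub, abs_mul, abs_of_pos hLpos] at h3
      rw [AbsoluteValue.abs_apply, Matrix.sub_apply, le_div_iff₀ hLpos]
      linarith
    have hle := Matrix.det_le hent
    rw [AbsoluteValue.abs_apply, hΔdet, Fintype.card_fin, nsmul_eq_mul] at hle
    have h4 : (1 / (L:ℝ)) ^ p ≤ 1 / L := by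
      refine pow_le_of_le_one (by positivity) ?_ hp.ne_zero
      rw [div_le_one hLpos]; simp [L]
    have h5 : (p.factorial : ℝ) * (1 / (L:ℝ)) < 1 := by
      rw [mul_one_div, div_lt_one hLpos]; simp [L]
    have h6 : (p.factorial : ℝ) * (1 / (L:ℝ)) ^ p ≤ (p.factorial : ℝ) * (1 / (L:ℝ)) := by gcongr
    linarith
  have hfinT : ((F : Set (Fin p × Fin p → ℤ)) ×ˢ J).Finite := F.finite_toSet.prod hJf
  refine ⟨Set.Finite.of_injOn hmaps hinj hfinT, ?_⟩
  have hle := Set.ncard_le_ncard_of_injOn _ hmaps hinj hfinT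
  rw [Set.ncard_prod, Set.ncard_coe_finset] at hle
  have hmp : (((m ^ p : ℕ) : ℝ)) ^ (ε / p) = (m:ℝ) ^ ε := by
    push_cast
    rw [← Real.rpow_natCast, ← Real.rpow_mul (by positivity), mul_div_cancel₀ _ hp0.ne']
  rw [hmp] at hJc
  calc ((OSet ι O z m δ).ncard : ℝ) ≤ F.card * J.ncard := by exact_mod_cast hle
    _ ≤ (F.card + 1) * (C0 * (m:ℝ) ^ ε) := by
        gcongr
        linarith
    _ = _ := by ring

/-- For a prime `p ≥ 3`, `δ ∈ (0,1]` and `ε > 0` there are `c, C > 0`,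
depending only on `p, δ, ε`, such that for every positive integer
`m ≤ c · D^(1/(4p(p-1)) - ε)` the set `𝒪(m; z, δ)` is finite with `#𝒪(m; z, δ) ≤ C·m^ε`. -/
theorem stmt13 (p : ℕ) (hp : p.Prime) (hp3 : 3 ≤ p) (δ ε : ℝ)
    (hδ0 : 0 < δ) (hδ1 : δ ≤ 1) (hε : 0 < ε) :
    ∃ c C : ℝ, 0 < c ∧ 0 < C ∧
      ∀ (A : Type) [DivisionRing A] [CharZero A]
        (ι : A →ₐ[ℚ] Matrix (Fin p) (Fin p) ℝ),
        Function.Injective ι →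
        Subalgebra.center ℚ A = ⊥ →
        Module.finrank ℚ A = p ^ 2 →
        ∀ O : Subring A, IsOrder A O →
        ∀ D : ℕ, IsDisc ι O D →
        ∀ z : Matrix.GeneralLinearGroup (Fin p) ℝ,
        ∀ m : ℕ, 1 ≤ m → (m : ℝ) ≤ c * (D : ℝ) ^ ((1 : ℝ) / (4 * p * (p - 1)) - ε) →
        (OSet ι O z m δ).Finite ∧ ((OSet ι O z m δ).ncard : ℝ) ≤ C * (m : ℝ) ^ ε := by
  have hp0 : 0 < p := hp.pos
  obtain ⟨C, hC, hcomm⟩ := aux_comm hp ε hε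
  set N : ℕ := 4 * p * (p - 1) with hN
  have hN0 : N ≠ 0 := by
    have : 0 < p - 1 := by omega
    positivity
  have hNR : (4 * p * (p - 1) : ℝ) = N := by
    rw [hN]; push_cast [Nat.cast_sub hp.one_le]; ring
  set Q : ℝ := ((p ^ 2).factorial * (p ^ 3 * (p * 2) ^ (2 * (p - 1) + 2 * (p - 1))) ^ (p ^ 2)) with hQ
  have hQ0 : 0 < Q := by
    have : (0:ℝ) < p := by exact_mod_cast hp0
    have h2 : (0:ℝ) < ((p ^ 2).factorial : ℝ) := by exact_mod_cast Nat.factorial_pos _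
    rw [hQ]; positivity
  refine ⟨1 / (2 * (Q + 1)), C, by positivity, hC, ?_⟩
  intro A _ _ ι _ _ hfr O hO D hD z m hm hmD
  have hm' : (1:ℝ) ≤ m := by exact_mod_cast hm
  have hc1 : 1 / (2 * (Q + 1)) < 1 := by
    rw [div_lt_one (by positivity)]; linarith
  have hD0 : D ≠ 0 := by
    rintro rfl
    have h1 : ((0 : ℕ) : ℝ) ^ ((1 : ℝ) / (4 * p * (p - 1)) - ε) ≤ 1 := by
      rw [Nat.cast_zero]; exact Real.zero_rpow_le_one _
    have h2 : 1 / (2 * (Q + 1)) * ((0 : ℕ) : ℝ) ^ ((1 : ℝ) / (4 * p * (p - 1)) - ε) ≤ 1 / (2 * (Q + 1)) * 1 := by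
      gcongr
    linarith
  refine hcomm A ι hfr O hO D hD hD0 z m hm δ hδ1 ?_
  intro α hα β hβ
  by_contra hne
  have hbound := aux_noncomm hp ι hfr O hO D hD hD0 z m hm δ hδ1 α β hα hβ hne
  rw [← hQ, ← hN] at hbound
  have hD1 : (1:ℝ) ≤ D := by exact_mod_cast Nat.one_le_iff_ne_zero.2 hD0
  rw [hNR] at hmD
  have h1 : (D:ℝ) ^ ((1:ℝ) / N - ε) ≤ (D:ℝ) ^ ((1:ℝ) / N) :=
    Real.rpow_le_rpow_of_exponent_le hD1 (by linarith)
  have h2 : (m:ℝ) ≤ 1 / (2 * (Q + 1)) * (D:ℝ) ^ ((1:ℝ) / N) := hmD.trans (by gcongr)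
  have h3 : (m:ℝ) ^ N ≤ (1 / (2 * (Q + 1))) ^ N * D := by
    have := pow_le_pow_left₀ (by positivity) h2 N
    rwa [mul_pow, one_div (N:ℝ), Real.rpow_inv_natCast_pow (by positivity) hN0] at this
  have h4 : (1 / (2 * (Q + 1))) ^ N ≤ 1 / (2 * (Q + 1)) :=
    pow_le_of_le_one (by positivity) hc1.le hN0
  have h5 : (m:ℝ) ^ N ≤ 1 / (2 * (Q + 1)) * (Q * (m:ℝ) ^ N) := by
    refine h3.trans ?_
    exact mul_le_mul h4 hbound (by positivity) (by positivity)
  have h6 : 1 / (2 * (Q + 1)) * Q < 1 := by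
    rw [one_div_mul_eq_div, div_lt_one (by positivity)]; linarith
  have h7 : (0:ℝ) < (m:ℝ) ^ N := by positivity
  nlinarith
end

section
/- Let n ≥ 3 be an odd integer and ε > 0. There exist ρ₀ > 0 depending only on n and C > 0 depending only on n and ε such that: for every real-split central division ℚ-algebra A of degree n, every order 𝒪 ⊆ A, every maximal order 𝒪_max of A containing 𝒪 (maximal with respect to inclusion among orders of A), every z ∈ GL_n(ℝ), every ρ ∈ (0, ρ₀], and every positive integer m coprime to disc(𝒪_max), the set 𝒪(m; z, ρ) is finite with #𝒪(m; z, ρ) ≤ C·m^{n-1+ε}. -/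
open Matrix

/-- slices -/
def mySlice {n : ℕ} (H : AddSubgroup (Fin (n+1) → ℤ)) : AddSubgroup (Fin n → ℤ) where
  carrier := {v | (Fin.cons 0 v : Fin (n+1) → ℤ) ∈ H}
  zero_mem' := by
    have : (Fin.cons 0 0 : Fin (n+1) → ℤ) = 0 := by ext i; refine Fin.cases ?_ ?_ i <;> simp
    simp only [Set.mem_ofPred_eq, this, H.zero_mem]
  add_mem' := by
    intro a b ha hb
    have : (Fin.cons 0 (a+b) : Fin (n+1) → ℤ) = Fin.cons 0 a + Fin.cons 0 b := by
      ext i; refine Fin.cases ?_ ?_ i <;> simp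
    simp only [Set.mem_ofPred_eq, this]; exact H.add_mem ha hb
  neg_mem' := by
    intro a ha
    have : (Fin.cons 0 (-a) : Fin (n+1) → ℤ) = - Fin.cons 0 a := by
      ext i; refine Fin.cases ?_ ?_ i <;> simp
    simp only [Set.mem_ofPred_eq, this]; exact H.neg_mem ha

theorem mySlice_mem {n : ℕ} (H : AddSubgroup (Fin (n+1) → ℤ)) (v : Fin n → ℤ) :
    v ∈ mySlice H ↔ (Fin.cons 0 v : Fin (n+1) → ℤ) ∈ H := Iff.rfl

/-- Data: generator d of the projection, w with cons d w ∈ H; index factorization. -/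
theorem mySlice_data {n : ℕ} (H : AddSubgroup (Fin (n+1) → ℤ)) (hH : H.index ≠ 0) :
    ∃ d : ℕ, ∃ w : Fin n → ℤ, (∀ a v, (Fin.cons a v : Fin (n+1) → ℤ) ∈ H ↔
      ∃ b : ℤ, a = b * d ∧ v - b • w ∈ mySlice H) ∧ H.index = d * (mySlice H).index := by
  let π : (Fin (n+1) → ℤ) →+ ℤ := Pi.evalAddMonoidHom _ 0
  let j : (Fin n → ℤ) →+ (Fin (n+1) → ℤ) :=
    { toFun := fun v => Fin.cons 0 v
      map_zero' := by ext i; refine Fin.cases ?_ ?_ i <;> simp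
      map_add' := by intro a b; ext i; refine Fin.cases ?_ ?_ i <;> simp }
  obtain ⟨d0, hd0⟩ := Int.subgroup_cyclic (H.map π)
  set d := d0.natAbs
  have hmem : ∀ a : ℤ, a ∈ H.map π ↔ (d:ℤ) ∣ a := by
    intro a
    rw [hd0, AddSubgroup.mem_closure_singleton]
    rw [Int.natAbs_dvd]
    constructor
    · rintro ⟨k, rfl⟩; exact ⟨k, by simp [mul_comm]⟩
    · rintro ⟨k, rfl⟩; exact ⟨k, by simp [mul_comm]⟩
  obtain ⟨x, hx, hxd⟩ := (hmem d).mpr dvd_rfl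
  have hx0 : x 0 = d := hxd
  refine ⟨d, Fin.tail x, ?_, ?_⟩
  · intro a v
    have key : ∀ b : ℤ, (Fin.cons (b*d) v : Fin (n+1) → ℤ) ∈ H ↔ v - b • Fin.tail x ∈ mySlice H := by
      intro b
      rw [mySlice_mem]
      have : (Fin.cons 0 (v - b • Fin.tail x) : Fin (n+1) → ℤ) = Fin.cons (b*d) v - b • x := by
        ext i; refine Fin.cases ?_ ?_ i <;> simp [hx0, Fin.tail]
      rw [this]
      rw [sub_eq_add_neg]; exact (add_mem_cancel_right (H.neg_mem (H.zsmul_mem hx b))).symm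
    constructor
    · intro h
      have : (d:ℤ) ∣ a := (hmem a).mp ⟨_, h, by simp [π]⟩
      obtain ⟨b, hb⟩ := this
      refine ⟨b, by rw [hb, mul_comm], ?_⟩
      rw [← key, mul_comm, ← hb]; exact h
    · rintro ⟨b, rfl, h⟩; exact (key b).mpr h
  · have hs : mySlice H = H.comap j := rfl
    have hK : j.range = π.ker := by
      ext y; constructor
      · rintro ⟨v, rfl⟩; simp [j, π, AddMonoidHom.mem_ker]
      · intro hy; exact ⟨Fin.tail y, by
          have : y 0 = 0 := hy
          ext i; refine Fin.cases ?_ ?_ i <;> simp [j, this, Fin.tail]⟩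
    have h1 : (mySlice H).index = H.relIndex π.ker := by
      rw [hs, AddSubgroup.index_comap, hK]
    have h2 : (H.map π).index = d := by
      have : H.map π = AddSubgroup.zmultiples (d:ℤ) := by
        ext a; rw [hmem, Int.mem_zmultiples_iff]
      rw [this, Int.index_zmultiples]; simp
    have h3 : π.range = ⊤ := AddMonoidHom.range_eq_top.mpr (fun a => ⟨fun _ => a, rfl⟩)
    rw [h1, ← h2, AddSubgroup.index_map, h3, AddSubgroup.index_top, mul_one]
    rw [← AddSubgroup.relIndex_sup_left, mul_comm]
    exact (AddSubgroup.relIndex_mul_index le_sup_left).symm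


open Classical in
/-- reconstruct a subgroup from slice data -/
noncomputable def myBuild {n : ℕ} (d : ℕ) (H' : AddSubgroup (Fin n → ℤ)) (w : Fin n → ℤ) :
    AddSubgroup (Fin (n+1) → ℤ) :=
  if h : ∃ H : AddSubgroup (Fin (n+1) → ℤ), ∀ a v, (Fin.cons a v : Fin (n+1) → ℤ) ∈ H ↔
      ∃ b : ℤ, a = b * d ∧ v - b • w ∈ H' then h.choose else ⊥

theorem myBuild_eq {n : ℕ} (d : ℕ) (H' : AddSubgroup (Fin n → ℤ)) (w w' : Fin n → ℤ)
    (hw : w - w' ∈ H') (H : AddSubgroup (Fin (n+1) → ℤ))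
    (hH : ∀ a v, (Fin.cons a v : Fin (n+1) → ℤ) ∈ H ↔ ∃ b : ℤ, a = b * d ∧ v - b • w ∈ H') :
    myBuild d H' w' = H := by
  have hH' : ∀ a v, (Fin.cons a v : Fin (n+1) → ℤ) ∈ H ↔ ∃ b : ℤ, a = b * d ∧ v - b • w' ∈ H' := by
    intro a v
    rw [hH]
    refine exists_congr fun b => and_congr_right fun _ => ?_
    have : v - b • w' = (v - b • w) + b • (w - w') := by rw [smul_sub]; abel
    rw [this]
    exact (add_mem_cancel_right (H'.zsmul_mem hw b)).symm
  have hex : ∃ H : AddSubgroup (Fin (n+1) → ℤ), ∀ a v, (Fin.cons a v : Fin (n+1) → ℤ) ∈ H ↔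
      ∃ b : ℤ, a = b * d ∧ v - b • w' ∈ H' := ⟨H, hH'⟩
  rw [myBuild, dif_pos hex]
  ext x
  rw [← Fin.cons_self_tail x, hex.choose_spec, hH']

theorem my_count (n : ℕ) : ∀ m : ℕ, m ≠ 0 →
    {H : AddSubgroup (Fin (n+1) → ℤ) | H.index = m}.Finite ∧
    {H : AddSubgroup (Fin (n+1) → ℤ) | H.index = m}.ncard ≤ (m.divisors.card * m)^n := by
  classical
  induction n with
  | zero =>
    intro m hm
    have hsub : {H : AddSubgroup (Fin (0+1) → ℤ) | H.index = m} ⊆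
        {myBuild m ⊤ 0} := by
      intro H hH
      rw [Set.mem_ofPred_eq] at hH
      obtain ⟨d, w, h1, h2⟩ := mySlice_data H (by omega)
      have h3 : mySlice H = ⊤ := by
        ext x; simp only [AddSubgroup.mem_top, iff_true]
        rw [Subsingleton.elim x 0]; exact (mySlice H).zero_mem
      rw [h3] at h1 h2
      simp only [AddSubgroup.index_top, mul_one] at h2
      rw [Set.mem_singleton_iff]
      symm
      apply myBuild_eq _ _ w _ (by simp)
      rw [← hH, h2]; exact h1
    refine ⟨(Set.finite_singleton _).subset hsub, ?_⟩
    calc _ ≤ _ := Set.ncard_le_ncard hsub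
      _ = _ := by simp
  | succ n ih =>
    intro m hm
    have hfinq : ∀ (d : ℕ) (H' : AddSubgroup (Fin (n+1) → ℤ)),
      H'.index ≠ 0 → Finite ((Fin (n+1) → ℤ) ⧸ H') := fun d H' h =>
        haveI : H'.FiniteIndex := ⟨h⟩
        AddSubgroup.finite_quotient_of_finiteIndex
    let S : ℕ → Finset (AddSubgroup (Fin (n+1) → ℤ)) := fun k =>
      if h : k ≠ 0 then (ih k h).1.toFinset else ∅
    have hS : ∀ k, k ≠ 0 → ∀ H, H ∈ S k ↔ H.index = k := by
      intro k hk H; simp only [S]; rw [dif_pos hk]; simp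
    have hScard : ∀ k, k ≠ 0 → (S k).card ≤ (k.divisors.card * k)^n := by
      intro k hk
      have := (ih k hk).2
      rw [Set.ncard_eq_toFinset_card _ (ih k hk).1] at this
      simp only [S]; rw [dif_pos hk]; exact this
    let Q : ℕ → AddSubgroup (Fin (n+1) → ℤ) → Finset (AddSubgroup (Fin (n+1+1) → ℤ)) := fun d H' =>
      if h : H'.index ≠ 0 then
        haveI := hfinq d H' h
        (Set.finite_range (fun c : (Fin (n+1) → ℤ) ⧸ H' => myBuild d H' c.out)).toFinset
      else ∅
    have hQcard : ∀ d H', H'.index ≠ 0 → (Q d H').card ≤ H'.index := by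
      intro d H' h
      haveI := hfinq d H' h
      simp only [Q]; rw [dif_pos h]
      rw [← Set.ncard_eq_toFinset_card _ (Set.finite_range _), ← Set.image_univ]
      refine (Set.ncard_image_le Set.finite_univ).trans ?_
      rw [Set.ncard_univ]; rfl
    let T := m.divisors.biUnion fun d => (S (m/d)).biUnion fun H' => Q d H'
    have hsub : {H : AddSubgroup (Fin (n+1+1) → ℤ) | H.index = m} ⊆ (T : Set _) := by
      intro H hH
      rw [Set.mem_ofPred_eq] at hH
      obtain ⟨d, w, h1, h2⟩ := mySlice_data H (by omega)
      rw [hH] at h2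
      have hd : d ≠ 0 := by rintro rfl; simp at h2; exact hm h2
      have hi : (mySlice H).index ≠ 0 := by intro h; rw [h] at h2; simp at h2; exact hm h2
      have hmd : m / d = (mySlice H).index := by
        rw [h2]; exact Nat.mul_div_cancel_left _ (Nat.pos_of_ne_zero hd)
      simp only [T, Finset.coe_biUnion, Set.mem_iUnion, Finset.mem_coe]
      refine ⟨d, Nat.mem_divisors.mpr ⟨⟨_, h2⟩, hm⟩, mySlice H, ?_, ?_⟩
      · rw [hS _ (by rw [hmd]; exact hi), hmd]
      · simp only [Q]; rw [dif_pos hi]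
        simp only [Set.Finite.mem_toFinset, Set.mem_range]
        refine ⟨(w : (Fin (n+1) → ℤ) ⧸ mySlice H), ?_⟩
        apply myBuild_eq _ _ w _ _ _ h1
        have : ((Quotient.out (w : (Fin (n+1) → ℤ) ⧸ mySlice H) : Fin (n+1) → ℤ) : (Fin (n+1) → ℤ) ⧸ mySlice H) = w :=
          Quotient.out_eq' _
        rw [QuotientAddGroup.eq] at this
        convert this using 1
        abel
    refine ⟨T.finite_toSet.subset hsub, ?_⟩
    calc _ ≤ _ := Set.ncard_le_ncard hsub T.finite_toSet
      _ = T.card := Set.ncard_coe_finset T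
      _ ≤ m.divisors.card * ((m.divisors.card * m)^n * m) := by
        apply Finset.card_biUnion_le_card_mul
        intro d hd
        obtain ⟨⟨k, hk⟩, _⟩ := Nat.mem_divisors.mp hd
        have hd0 : d ≠ 0 := by rintro rfl; simp at hk; exact hm hk
        have hk0 : k ≠ 0 := by rintro rfl; simp at hk; exact hm hk
        have hmd : m / d = k := by rw [hk]; exact Nat.mul_div_cancel_left _ (Nat.pos_of_ne_zero hd0)
        rw [hmd]
        have hkm : k ∣ m := ⟨d, by rw [hk, mul_comm]⟩
        calc _ ≤ (S k).card * k := by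
              apply Finset.card_biUnion_le_card_mul
              intro H' hH'
              rw [hS k hk0] at hH'
              exact (hQcard d H' (by omega)).trans hH'.le
          _ ≤ (k.divisors.card * k)^n * k := by gcongr; exact hScard k hk0
          _ ≤ _ := by
            have := Nat.le_of_dvd (Nat.pos_of_ne_zero hm) hkm
            have := Finset.card_le_card (Nat.divisors_subset_of_dvd hm hkm)
            gcongr
      _ = _ := by ring

theorem my_one_add_le (ε : ℝ) (hε : 0 < ε) (p : ℕ) (hp : 2 ≤ p) (k : ℕ) :
    ((k:ℝ) + 1) ≤ (1 + 1 / (ε * Real.log 2)) * ((p:ℝ)^k) ^ ε := by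
  have hl : 0 < Real.log 2 := Real.log_pos (by norm_num)
  have h1 : (2:ℝ)^k ≤ (p:ℝ)^k := by gcongr; exact_mod_cast hp
  have h2 : ((2:ℝ)^k)^ε ≤ ((p:ℝ)^k)^ε := by gcongr
  have h3 : ((2:ℝ)^k)^ε = Real.exp (k * (ε * Real.log 2)) := by
    rw [Real.rpow_def_of_pos (by positivity), Real.log_pow]; ring_nf
  have h4 := Real.add_one_le_exp ((k:ℝ) * (ε * Real.log 2))
  have h5 : 0 < ε * Real.log 2 := by positivity
  set a := ε * Real.log 2
  have h6 : (k:ℝ) * a + 1 ≤ ((p:ℝ)^k)^ε := by linarith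
  have h7 : (1 + 1/a) * ((k:ℝ) * a + 1) = k * a + 1 + k + 1 / a := by field_simp; ring
  calc ((k:ℝ) + 1) ≤ (1 + 1/a) * ((k:ℝ) * a + 1) := by
        rw [h7]; have : 0 ≤ (k:ℝ) * a := by positivity
        have : 0 < 1 / a := by positivity
        linarith
    _ ≤ _ := by gcongr

theorem my_one_add_le' (ε : ℝ) (hε : 0 < ε) (p : ℕ) (hp : (2:ℝ) ^ (1/ε) ≤ p) (k : ℕ) :
    ((k:ℝ) + 1) ≤ ((p:ℝ)^k) ^ ε := by
  have h1 : (2:ℝ) ≤ (p:ℝ)^ε := by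
    calc (2:ℝ) = ((2:ℝ) ^ (1/ε))^ε := by
          rw [← Real.rpow_mul (by norm_num)]; field_simp; simp
      _ ≤ _ := by gcongr
  have h2 : ((p:ℝ)^k) ^ ε = ((p:ℝ)^ε)^k := by
    rw [← Real.rpow_natCast, ← Real.rpow_natCast, ← Real.rpow_mul (by positivity), ← Real.rpow_mul (by positivity), mul_comm]
  rw [h2]
  calc ((k:ℝ) + 1) ≤ 2^k := by exact_mod_cast (Nat.lt_two_pow_self (n := k))
    _ ≤ _ := by gcongr

theorem my_divisor_bound (ε : ℝ) (hε : 0 < ε) :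
    ∃ C : ℝ, 0 < C ∧ ∀ m : ℕ, m ≠ 0 → (m.divisors.card : ℝ) ≤ C * (m:ℝ) ^ ε := by
  set K : ℝ := 1 + 1 / (ε * Real.log 2)
  have hl : 0 < Real.log 2 := Real.log_pos (by norm_num)
  have hK : 1 ≤ K := by
    have : 0 ≤ 1 / (ε * Real.log 2) := by positivity
    simp only [K]; linarith
  obtain ⟨Q, hQ⟩ := exists_nat_ge ((2:ℝ) ^ (1/ε))
  refine ⟨K ^ Q, by positivity, fun m hm => ?_⟩
  rw [Nat.card_divisors hm]
  have hmm : (m:ℝ)^ε = ∏ p ∈ m.primeFactors, ((p:ℝ)^(m.factorization p))^ε := by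
    rw [Real.finsetProd_rpow _ _ (fun i _ => by positivity)]
    congr 1
    conv_lhs => rw [← Nat.prod_factorization_pow_eq_self hm]
    rw [Finsupp.prod]; push_cast; rfl
  push_cast
  have h1 : ∏ p ∈ m.primeFactors, ((m.factorization p : ℝ) + 1) ≤
      ∏ p ∈ m.primeFactors, ((if p < Q then K else 1) * ((p:ℝ)^(m.factorization p))^ε) := by
    apply Finset.prod_le_prod (fun i _ => by positivity)
    intro p hp
    split_ifs with h
    · exact my_one_add_le ε hε p (Nat.prime_of_mem_primeFactors hp).two_le _
    · rw [one_mul]; apply my_one_add_le' ε hε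
      push Not at h
      exact hQ.trans (by exact_mod_cast h)
  refine h1.trans ?_
  rw [Finset.prod_mul_distrib, ← hmm]
  gcongr
  rw [Finset.prod_ite, Finset.prod_const, Finset.prod_const_one, mul_one]
  apply pow_le_pow_right₀ hK
  calc _ ≤ (Finset.range Q).card := Finset.card_le_card (fun x hx => by
        simp at hx ⊢; exact hx.2)
    _ = Q := by simp

theorem my_det_sub_SO {n : ℕ} (hodd : Odd n) (k k' : Matrix (Fin n) (Fin n) ℝ) (h : IsSO k) (h' : IsSO k') :
    (k' - k).det = 0 := by
  have h1 : kᵀ * (k' - k) * k'ᵀ = - (k' - k)ᵀ := by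
    have : k' * k'ᵀ = 1 := mul_eq_one_comm.mp h'.1
    rw [mul_sub, sub_mul, h.1, mul_assoc, this]; simp
  have h2 := congrArg Matrix.det h1
  rw [det_mul, det_mul, det_neg, det_transpose, det_transpose, det_transpose, h.2, h'.2, Fintype.card_fin,
    hodd.neg_one_pow] at h2
  linarith

theorem my_SO_entry {n : ℕ} (k : Matrix (Fin n) (Fin n) ℝ) (h : IsSO k) (i j) : |k i j| ≤ 1 := by
  have h1 := congrFun (congrFun h.1 j) j
  simp only [mul_apply, transpose_apply, one_apply_eq] at h1
  have h2 : k i j * k i j ≤ ∑ x, k x j * k x j :=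
    Finset.single_le_sum (f := fun x => k x j * k x j) (fun _ _ => mul_self_nonneg _) (Finset.mem_univ i)
  rw [h1] at h2
  exact abs_le_one_iff_mul_self_le_one.mpr h2

theorem my_rho (n : ℕ) (hodd : Odd n) : ∃ ρ₀ : ℝ, 0 < ρ₀ ∧
    ∀ (X X' k k' : Matrix (Fin n) (Fin n) ℝ), IsSO k → IsSO k' →
      (∀ i j, |(X - k) i j| < ρ₀) → (∀ i j, |(X' - k') i j| < ρ₀) → |(X' - X).det| < 1 := by
  have hc : IsCompact (Set.Icc (fun _ _ => -4 : Fin n → Fin n → ℝ) (fun _ _ => 4)) := isCompact_Icc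
  have hcont : Continuous (fun M : Fin n → Fin n → ℝ => (Matrix.of M).det) :=
    Continuous.matrix_det (by exact continuous_id)
  have hu := hc.uniformContinuousOn_of_continuous hcont.continuousOn
  rw [Metric.uniformContinuousOn_iff] at hu
  obtain ⟨δ, hδ, H⟩ := hu 1 one_pos
  refine ⟨min (δ/3) 1, by positivity, fun X X' k k' hk hk' h h' => ?_⟩
  have e1 := my_SO_entry k hk
  have e2 := my_SO_entry k' hk'
  have := H (fun i j => (X' - X) i j) ?_ (fun i j => (k' - k) i j) ?_ ?_
  · have hz : (Matrix.of fun i j => (k' - k) i j).det = 0 := my_det_sub_SO hodd k k' hk hk'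
    simp only [hz, dist_zero_right] at this
    exact this
  · constructor <;> intro i j <;>
    · have a1 := abs_lt.mp (h i j); have a2 := abs_lt.mp (h' i j)
      have a3 := abs_le.mp (e1 i j); have a4 := abs_le.mp (e2 i j)
      have := min_le_right (δ/3) 1
      simp only [Matrix.sub_apply] at *
      linarith
  · constructor <;> intro i j <;>
    · have a3 := abs_le.mp (e1 i j); have a4 := abs_le.mp (e2 i j)
      simp only [Matrix.sub_apply] at *
      linarith
  · rw [dist_pi_lt_iff hδ]; intro i
    rw [dist_pi_lt_iff hδ]; intro j
    have a1 := abs_lt.mp (h i j); have a2 := abs_lt.mp (h' i j)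
    have := min_le_left (δ/3) 1
    change |(X' i j - X i j) - (k' i j - k i j)| < δ
    rw [abs_lt]
    simp only [Matrix.sub_apply] at *
    constructor <;> linarith

/-- every linear endomorphism is a sum of two-sided multiplications -/
def MyAz (I K S : Type*) [Fintype I] [CommRing K] [Ring S] [Algebra K S] : Prop :=
  ∀ f : S →ₗ[K] S, ∃ a b : I → S, ∀ v, f v = ∑ i, a i * v * b i

theorem my_exists_functional {K V : Type*} [Field K] [AddCommGroup V] [Module K V] (x : V) (hx : x ≠ 0) :
    ∃ φ : V →ₗ[K] K, φ x = 1 := by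
  exact Module.Projective.exists_dual_eq_one K hx

theorem my_az_simple {I K B : Type*} [Fintype I] [Field K] [Ring B] [Nontrivial B] [Algebra K B]
    (h : MyAz I K B) : IsSimpleRing B := by
  refine ⟨⟨fun J => ?_⟩⟩
  by_cases hJ : J = ⊥
  · exact Or.inl hJ
  right
  have : ∃ x ∈ J, x ≠ 0 := by
    by_contra hcon
    push Not at hcon
    apply hJ
    rw [eq_bot_iff]; intro x hx
    rw [hcon x hx]; exact TwoSidedIdeal.zero_mem _
  obtain ⟨x, hx, hx0⟩ := this
  obtain ⟨φ, hφ⟩ := my_exists_functional (K := K) x hx0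
  rw [eq_top_iff]; intro y _
  obtain ⟨a, b, hab⟩ := h (φ.smulRight y)
  have := hab x
  simp only [LinearMap.smulRight_apply, hφ, one_smul] at this
  rw [this]
  exact sum_mem fun i _ => TwoSidedIdeal.mul_mem_right _ _ _ (TwoSidedIdeal.mul_mem_left _ _ _ hx)

theorem my_az_central {I K B : Type*} [Fintype I] [Field K] [Ring B] [Nontrivial B] [Algebra K B]
    (h : MyAz I K B) (c : B) (hc : ∀ x, c * x = x * c) : ∃ k : K, c = k • (1:B) := by
  obtain ⟨φ, hφ⟩ := my_exists_functional (K := K) (1:B) one_ne_zero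
  obtain ⟨a, b, hab⟩ := h (φ.smulRight 1)
  have h1 := hab c
  have h2 := hab 1
  simp only [LinearMap.smulRight_apply, hφ, one_smul, mul_one] at h1 h2
  refine ⟨φ c, ?_⟩
  rw [h1]
  have : ∀ i, a i * c * b i = c * (a i * b i) := fun i => by rw [← hc, mul_assoc]
  simp only [this]
  rw [← Finset.mul_sum, ← h2, mul_one]

theorem my_rank_one (p : ℕ) [Fact p.Prime] {I B : Type*} [Fintype I] [Ring B] [Nontrivial B]
    [Algebra (ZMod p) B] [Module.Finite (ZMod p) B] (h : MyAz I (ZMod p) B) :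
    ∃ e : B, e * e = e ∧ e ≠ 0 ∧ ∀ x, ∃ j : ℤ, e * x * e = j • e := by
  classical
  have := my_az_simple h
  have : IsArtinianRing B := IsArtinianRing.of_finite (ZMod p) B
  obtain ⟨r, hr, D, _, _, _, ⟨E⟩⟩ := IsSimpleRing.exists_algEquiv_matrix_divisionRing_finite (ZMod p) B
  have : Finite D := Module.finite_of_finite (ZMod p)
  have hcomm : ∀ x y : D, x * y = y * x := fun x y => (littleWedderburn D).mul_comm x y
  have hD : ∀ d : D, ∃ k : ZMod p, d = k • 1 := by
    intro d
    obtain ⟨k, hk⟩ := my_az_central h (E.symm (Matrix.scalar (Fin r) d)) (by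
      intro x
      apply E.injective
      rw [map_mul, map_mul, E.apply_symm_apply]
      exact Matrix.scalar_commute d (fun y => hcomm d y) (E x))
    refine ⟨k, ?_⟩
    have h2 := congrArg E hk
    rw [E.apply_symm_apply, map_smul, map_one] at h2
    have := congrFun (congrFun h2 0) 0
    simpa using this
  refine ⟨E.symm (Matrix.single 0 0 1), ?_, ?_, ?_⟩
  · rw [← map_mul]; simp
  · intro h0
    have := congrArg E h0
    rw [E.apply_symm_apply, map_zero] at this
    have := congrFun (congrFun this 0) 0
    simp at this
  · intro x
    obtain ⟨k, hk⟩ := hD (E x 0 0)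
    refine ⟨k.val, ?_⟩
    apply E.injective
    rw [map_mul, map_mul, map_zsmul, E.apply_symm_apply]
    rw [Matrix.single_mul_mul_single, hk]
    ext i j
    simp only [Matrix.single_apply, Matrix.smul_apply]
    split_ifs
    · have h3 : ((k.val : ZMod p)) = k := ZMod.natCast_zmod_val k
      have h4 : k • (1:D) = ((k.val : ℕ) : D) := by
        conv_lhs => rw [← h3]
        rw [Algebra.smul_def, map_natCast, mul_one]
      rw [one_mul, mul_one, h4]; simp only [zsmul_eq_mul, mul_one, Int.cast_natCast]
    · simp


theorem my_nonunit (p k : ℕ) [Fact p.Prime] (hk : k ≠ 0) (a : ZMod (p^k)) (ha : ¬ IsUnit a) :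
    ∃ b : ZMod (p^k), a = p * b := by
  have hp : p.Prime := Fact.out
  have : NeZero (p^k) := ⟨pow_ne_zero _ hp.ne_zero⟩
  rw [← ZMod.natCast_zmod_val a, ZMod.isUnit_natCast_iff_not_dvd_pow hp (Nat.pos_of_ne_zero hk), not_not] at ha
  obtain ⟨b, hb⟩ := ha
  refine ⟨b, ?_⟩
  rw [← ZMod.natCast_zmod_val a, hb]; push_cast; rfl

theorem my_local (p k : ℕ) [Fact p.Prime] (hk : k ≠ 0) : IsLocalRing (ZMod (p^k)) := by
  have hp : p.Prime := Fact.out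
  have : Fact (1 < p^k) := ⟨Nat.one_lt_pow hk hp.one_lt⟩
  apply IsLocalRing.of_isUnit_or_isUnit_one_sub_self
  intro a
  by_cases ha : IsUnit a
  · exact Or.inl ha
  right
  obtain ⟨b, rfl⟩ := my_nonunit p k hk a ha
  apply IsNilpotent.isUnit_one_sub
  refine ⟨k, ?_⟩
  rw [mul_pow]
  have : ((p : ZMod (p^k)))^k = 0 := by
    rw [← Nat.cast_pow]; exact ZMod.natCast_self _
  rw [this, zero_mul]

theorem my_lemA (p k : ℕ) [Fact p.Prime] (hk : k ≠ 0) {I S B : Type*} [Fintype I]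
    [Ring S] [Algebra (ZMod (p^k)) S] [Module.Free (ZMod (p^k)) S] [Module.Finite (ZMod (p^k)) S]
    [Ring B] [Nontrivial B] [Algebra (ZMod p) B] [Module.Finite (ZMod p) B]
    (π : S →+* B) (hπ : Function.Surjective π) (hker : ∀ x, π x = 0 → ∃ y, x = (p:ℤ) • y)
    (hS : MyAz I (ZMod (p^k)) S) (hB : MyAz I (ZMod p) B) :
    ∃ r : ℕ, Nonempty (S ≃+* Matrix (Fin r) (Fin r) (ZMod (p^k))) := by
  classical
  have := my_local p k hk
  have hpk : ∀ y : S, ((p:ℤ)^k) • y = 0 := by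
    intro y
    have h1 : (((p:ℤ)^k : ℤ) : ZMod (p^k)) = 0 := by
      have := ZMod.natCast_self (p^k)
      push_cast at this ⊢
      exact this
    rw [← Int.cast_smul_eq_zsmul (ZMod (p^k)), h1, zero_smul]
  have hpB : ∀ y : B, (p:ℤ) • y = 0 := by
    intro y
    rw [← Int.cast_smul_eq_zsmul (ZMod p)]; simp
  obtain ⟨e0, he0, hne, hrank⟩ := my_rank_one p hB
  have hnil : ∀ x ∈ RingHom.ker π, IsNilpotent x := by
    intro x hx
    obtain ⟨y, rfl⟩ := hker x hx
    refine ⟨k, ?_⟩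
    rw [smul_pow]; exact hpk _
  obtain ⟨e, he, hee⟩ := exists_isIdempotentElem_eq_of_ker_isNilpotent π hnil e0 (hπ e0) he0
  have he : e * e = e := he
  -- corner ring
  have hc1 : ∀ x, ∃ (j : ℤ) (y : S), e * x * e = j • e + (p:ℤ) • (e * y * e) := by
    intro x
    obtain ⟨j, hj⟩ := hrank (π x)
    obtain ⟨y, hy⟩ := hker (e * x * e - j • e) (by
      rw [map_sub, map_zsmul, map_mul, map_mul, hee, hj, sub_self])
    refine ⟨j, y, ?_⟩
    have h1 : e * (e * x * e - j • e) * e = e * ((p:ℤ) • y) * e := by rw [hy]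
    have h2 : e * (e * x * e - j • e) * e = e * x * e - j • e := by
      rw [mul_sub, sub_mul, mul_smul_comm, smul_mul_assoc, he, he]
      congr 1
      rw [← mul_assoc, ← mul_assoc, he, mul_assoc, he]
    rw [h2, mul_smul_comm, smul_mul_assoc] at h1
    rw [← h1]; abel
  have hc2 : ∀ (i : ℕ) (x : S), ∃ (j : ℤ) (y : S), e * x * e = j • e + ((p:ℤ)^i) • (e * y * e) := by
    intro i
    induction i with
    | zero => intro x; exact ⟨0, x, by simp⟩
    | succ i ih =>
      intro x
      obtain ⟨j, y, h1⟩ := ih x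
      obtain ⟨j', y', h2⟩ := hc1 y
      refine ⟨j + (p:ℤ)^i * j', y', ?_⟩
      rw [h1, h2, smul_add, add_smul, mul_smul, pow_succ, mul_smul, add_assoc]
  have hcorner : ∀ x, ∃ j : ℤ, e * x * e = j • e := by
    intro x
    obtain ⟨j, y, h⟩ := hc2 k x
    exact ⟨j, by rw [h, hpk, add_zero]⟩
  -- the module P = S e
  let P : Submodule (ZMod (p^k)) S := LinearMap.range (LinearMap.mulRight (ZMod (p^k)) e)
  have hP : ∀ x : S, x ∈ P ↔ x * e = x := by
    intro x; constructor
    · rintro ⟨y, rfl⟩; simp [mul_assoc, he]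
    · intro h; exact ⟨x, by simpa using h⟩
  let pr : S →ₗ[ZMod (p^k)] P := (LinearMap.mulRight (ZMod (p^k)) e).rangeRestrict
  have hpr : ∀ x, ((pr x : P) : S) = x * e := fun x => rfl
  have hproj : Module.Projective (ZMod (p^k)) P := by
    refine Module.Projective.of_split P.subtype pr ?_
    ext x
    simp only [LinearMap.comp_apply, hpr, Submodule.subtype_apply, LinearMap.id_apply]
    exact (hP _).mp x.2
  have hfin : Module.Finite (ZMod (p^k)) P := Module.Finite.range _
  have hfree : Module.Free (ZMod (p^k)) P := Module.free_of_flat_of_isLocalRing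
  -- action
  have hact : ∀ (s : S) (x : P), s * (x : S) ∈ P := fun s x => by
    rw [hP, mul_assoc, (hP _).mp x.2]
  let Φ : S →+* Module.End (ZMod (p^k)) P :=
    { toFun := fun s => LinearMap.codRestrict P ((LinearMap.mulLeft (ZMod (p^k)) s) ∘ₗ P.subtype) (hact s)
      map_one' := by ext x; simp
      map_mul' := by intro a b; ext x; exact mul_assoc a b (x:S)
      map_zero' := by ext x; simp
      map_add' := by intro a b; ext x; exact add_mul a b (x:S) }
  have hΦ : ∀ s x, ((Φ s x : P) : S) = s * (x:S) := fun s x => rfl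
  have hsurj : Function.Surjective Φ := by
    intro f
    obtain ⟨a, b, hab⟩ := hS (P.subtype ∘ₗ f ∘ₗ pr)
    choose j hj using fun i => hcorner (b i)
    refine ⟨∑ i, j i • a i, ?_⟩
    ext x
    rw [hΦ]
    have hx := (hP _).mp x.2
    have h1 : pr x = x := Subtype.ext (by rw [hpr, hx])
    have h2 := hab x
    simp only [LinearMap.comp_apply, h1, Submodule.subtype_apply] at h2
    have h3 := (hP _).mp (f x).2
    rw [← h3, h2, Finset.sum_mul, Finset.sum_mul]
    refine Finset.sum_congr rfl fun i _ => ?_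
    calc j i • a i * (x:S) = a i * (x : S) * (j i • e) := by
          rw [mul_smul_comm, smul_mul_assoc, mul_assoc, hx]
      _ = a i * ((x : S) * e) * b i * e := by rw [← hj]; simp only [mul_assoc]
      _ = _ := by rw [hx]
  have hinj : Function.Injective Φ := by
    rw [injective_iff_map_eq_zero]
    intro s hs
    -- functional with φ e = 1
    obtain ⟨φ, hφ⟩ : ∃ φ : S →ₗ[ZMod (p^k)] ZMod (p^k), φ e = 1 := by
      let β := Module.Free.chooseBasis (ZMod (p^k)) S
      by_cases hu : ∃ i, IsUnit (β.repr e i)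
      · obtain ⟨i, u, hu⟩ := hu
        refine ⟨(↑u⁻¹ : ZMod (p^k)) • β.coord i, ?_⟩
        simp [← hu]
      · exfalso
        push Not at hu
        choose c hc using fun i => my_nonunit p k hk _ (hu i)
        have h1 : e = (p:ℤ) • ∑ i, c i • β i := by
          conv_lhs => rw [← β.sum_repr e]
          rw [Finset.smul_sum]
          refine Finset.sum_congr rfl fun i _ => ?_
          rw [hc i, mul_smul, ← Int.cast_smul_eq_zsmul (ZMod (p^k))]
          simp
        have h2 := congrArg π h1
        rw [map_zsmul, hpB, hee] at h2
        exact hne h2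
    obtain ⟨a, b, hab⟩ := hS (φ.smulRight 1)
    have h1 := hab e
    simp only [LinearMap.smulRight_apply, hφ, one_smul] at h1
    have h2 : ∀ x : S, s * (x * e) = 0 := by
      intro x
      have := congrArg (fun f => ((f (pr x) : P) : S)) hs
      simpa [hΦ, hpr] using this
    calc s = s * 1 := (mul_one s).symm
      _ = ∑ i, s * (a i * e) * b i := by rw [h1, Finset.mul_sum]; simp only [mul_assoc]
      _ = 0 := by simp [h2]
  let bP := Module.finBasis (ZMod (p^k)) P
  exact ⟨_, ⟨(RingEquiv.ofBijective Φ ⟨hinj, hsurj⟩).trans (algEquivMatrix bP).toRingEquiv⟩⟩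

open scoped TensorProduct

/-- scaled two-sided multiplication expansion of endomorphisms -/
def MyStar (I O : Type*) [Fintype I] [Ring O] (p : ℕ) : Prop :=
  ∃ t : ℤ, ¬ ((p:ℤ) ∣ t) ∧ ∀ F : O →ₗ[ℤ] O, ∃ a b : I → O, ∀ x, t • F x = ∑ i, a i * x * b i

theorem my_inc_surj {O : Type*} [Ring O] (q : ℕ) [NeZero q] (v : ZMod q ⊗[ℤ] O) : ∃ x : O, v = 1 ⊗ₜ x := by
  induction v with
  | zero => exact ⟨0, by simp⟩
  | tmul z x =>
    refine ⟨(z.val : ℤ) • x, ?_⟩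
    rw [← TensorProduct.smul_tmul]
    congr 1
    simp
  | add v w hv hw =>
    obtain ⟨x, rfl⟩ := hv
    obtain ⟨y, rfl⟩ := hw
    exact ⟨x + y, by rw [TensorProduct.tmul_add]⟩

theorem my_inc_ker {O J : Type*} [Ring O] [Fintype J] (b : Module.Basis J ℤ O) (q : ℕ) (x : O)
    (hx : (1 : ZMod q) ⊗ₜ[ℤ] x = 0) : ∃ y : O, x = (q:ℤ) • y := by
  have h1 : ∀ i, (q:ℤ) ∣ b.repr x i := by
    intro i
    have := congrArg (fun v => (Algebra.TensorProduct.basis (ZMod q) b).repr v i) hx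
    simp at this
    rwa [ZMod.intCast_zmod_eq_zero_iff_dvd] at this
  choose c hc using h1
  refine ⟨∑ i, c i • b i, ?_⟩
  conv_lhs => rw [← b.sum_repr x]
  rw [Finset.smul_sum]
  refine Finset.sum_congr rfl fun i _ => ?_
  rw [hc i, mul_smul]

theorem my_az_tensor {I O J : Type*} [Fintype I] [Ring O] [Fintype J] (b : Module.Basis J ℤ O) (p k : ℕ)
    [Fact p.Prime] (h : MyStar I O p) : MyAz I (ZMod (p^k)) (ZMod (p^k) ⊗[ℤ] O) := by
  classical
  have hp : p.Prime := Fact.out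
  have : NeZero (p^k) := ⟨pow_ne_zero _ hp.ne_zero⟩
  obtain ⟨t, ht, H⟩ := h
  have hu : IsUnit (t : ZMod (p^k)) := by
    have h1 : IsCoprime (p:ℤ) t := (Nat.prime_iff_prime_int.mp hp).coprime_iff_not_dvd.mpr ht
    have h2 : IsCoprime ((p:ℤ)^k) t := h1.pow_left
    obtain ⟨u, v, huv⟩ := h2
    have h3 := congrArg (Int.cast : ℤ → ZMod (p^k)) huv
    have h4 : (p : ZMod (p^k))^k = 0 := by rw [← Nat.cast_pow]; exact ZMod.natCast_self _
    push_cast at h3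
    rw [h4, mul_zero, zero_add] at h3
    exact IsUnit.of_mul_eq_one_right _ h3
  obtain ⟨u, hu⟩ := hu
  intro f
  choose y hy using fun l => my_inc_surj (p^k) (f (1 ⊗ₜ b l))
  let F : O →ₗ[ℤ] O := b.constr ℤ y
  have hF : ∀ x, f (1 ⊗ₜ x) = 1 ⊗ₜ F x := by
    have : (f.restrictScalars ℤ) ∘ₗ (TensorProduct.mk ℤ (ZMod (p^k)) O 1) =
        (TensorProduct.mk ℤ (ZMod (p^k)) O 1) ∘ₗ F := by
      apply b.ext
      intro l
      change f (1 ⊗ₜ b l) = 1 ⊗ₜ (b.constr ℤ y (b l))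
      rw [hy, Module.Basis.constr_basis]
    intro x
    exact LinearMap.congr_fun this x
  obtain ⟨α, β, hαβ⟩ := H F
  refine ⟨fun i => (↑u⁻¹ : ZMod (p^k)) ⊗ₜ α i, fun i => 1 ⊗ₜ β i, ?_⟩
  intro v
  obtain ⟨x, rfl⟩ := my_inc_surj (p^k) v
  rw [hF]
  simp only [Algebra.TensorProduct.tmul_mul_tmul, mul_one]
  rw [← TensorProduct.tmul_sum, ← hαβ, ← TensorProduct.smul_tmul]
  congr 1
  rw [← Int.cast_smul_eq_zsmul (ZMod (p^k)), ← hu]; simp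

theorem my_prime_pow {I O : Type*} [Fintype I] [Ring O] {n : ℕ} (hn : n ≠ 0)
    (b : Module.Basis (Fin (n^2)) ℤ O) (p k : ℕ)
    [Fact p.Prime] (hk : k ≠ 0) (h : MyStar I O p) :
    ∃ φ : O →+* Matrix (Fin n) (Fin n) (ZMod (p^k)), Function.Surjective φ ∧
      ∀ x, φ x = 0 → ∃ y, x = ((p^k : ℕ) : ℤ) • y := by
  classical
  have hp : p.Prime := Fact.out
  have : NeZero (p^k) := ⟨pow_ne_zero _ hp.ne_zero⟩
  have hq1 : 1 < p^k := Nat.one_lt_pow hk hp.one_lt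
  have : Fact (1 < p^k) := ⟨hq1⟩
  have hS := my_az_tensor b p k h
  have hB : MyAz I (ZMod p) (ZMod p ⊗[ℤ] O) := by
    have := my_az_tensor b p 1 h
    rwa [pow_one] at this
  have bS := Algebra.TensorProduct.basis (ZMod (p^k)) b
  have bB := Algebra.TensorProduct.basis (ZMod p) b
  have : Module.Free (ZMod (p^k)) (ZMod (p^k) ⊗[ℤ] O) := Module.Free.of_basis bS
  have : Module.Finite (ZMod (p^k)) (ZMod (p^k) ⊗[ℤ] O) := Module.Finite.of_basis bS
  have : Module.Finite (ZMod p) (ZMod p ⊗[ℤ] O) := Module.Finite.of_basis bB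
  have : Nontrivial (ZMod p ⊗[ℤ] O) := by
    apply Module.nontrivial_of_finrank_pos (R := ZMod p)
    rw [Module.finrank_eq_card_basis bB, Fintype.card_fin]; positivity
  let cst : ZMod (p^k) →ₐ[ℤ] ZMod p := (ZMod.castHom (dvd_pow_self p hk) (ZMod p)).toIntAlgHom
  let π : (ZMod (p^k) ⊗[ℤ] O) →+* (ZMod p ⊗[ℤ] O) :=
    (Algebra.TensorProduct.map cst (AlgHom.id ℤ O)).toRingHom
  have hπ : ∀ x : O, π (1 ⊗ₜ x) = 1 ⊗ₜ x := by
    intro x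
    change Algebra.TensorProduct.map cst (AlgHom.id ℤ O) (1 ⊗ₜ x) = 1 ⊗ₜ x
    rw [Algebra.TensorProduct.map_tmul, map_one]; rfl
  obtain ⟨r, ⟨E⟩⟩ := my_lemA p k hk π (by
      intro v
      obtain ⟨x, rfl⟩ := my_inc_surj p v
      exact ⟨1 ⊗ₜ x, hπ x⟩) (by
      intro v hv
      obtain ⟨x, rfl⟩ := my_inc_surj (p^k) v
      rw [hπ] at hv
      obtain ⟨y, rfl⟩ := my_inc_ker b p x hv
      exact ⟨1 ⊗ₜ y, by rw [TensorProduct.tmul_smul]⟩) hS hB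
  have hr : r = n := by
    have h1 := Nat.card_congr E.toEquiv
    have h2 : Nat.card (ZMod (p^k) ⊗[ℤ] O) = (p^k)^(n^2) := by
      rw [Nat.card_congr bS.equivFun.toEquiv]; simp
    have h3 : Nat.card (Matrix (Fin r) (Fin r) (ZMod (p^k))) = (p^k)^(r^2) := by
      unfold Matrix
      simp only [Nat.card_eq_fintype_card, Fintype.card_pi, ZMod.card, Finset.prod_const, Finset.card_univ, Fintype.card_fin]
      rw [← pow_mul, sq]
    rw [h2, h3] at h1
    have := Nat.pow_right_injective hq1 h1
    exact (Nat.pow_left_injective (n := 2) (by norm_num) this).symm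
  subst hr
  refine ⟨(E : _ →+* _).comp (Algebra.TensorProduct.includeRight : O →ₐ[ℤ] ZMod (p^k) ⊗[ℤ] O).toRingHom, ?_, ?_⟩
  · intro X
    obtain ⟨x, hx⟩ := my_inc_surj (p^k) (E.symm X)
    refine ⟨x, ?_⟩
    change E (1 ⊗ₜ x) = X
    rw [← hx, E.apply_symm_apply]
  · intro x hx
    apply my_inc_ker b
    change E (1 ⊗ₜ x) = 0 at hx
    exact (map_eq_zero_iff E E.injective).mp hx

theorem my_crt {O : Type*} [Ring O] {n a b : ℕ} (hab : Nat.Coprime a b)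
    (φ : O →+* Matrix (Fin n) (Fin n) (ZMod a)) (hφ : Function.Surjective φ)
    (hφ' : ∀ x, φ x = 0 → ∃ y, x = (a : ℤ) • y)
    (ψ : O →+* Matrix (Fin n) (Fin n) (ZMod b)) (hψ : Function.Surjective ψ)
    (hψ' : ∀ x, ψ x = 0 → ∃ y, x = (b : ℤ) • y) :
    ∃ χ : O →+* Matrix (Fin n) (Fin n) (ZMod (a*b)), Function.Surjective χ ∧
      ∀ x, χ x = 0 → ∃ y, x = ((a*b : ℕ) : ℤ) • y := by
  classical
  let e := ZMod.chineseRemainder hab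
  let P : O →+* Matrix (Fin n) (Fin n) (ZMod a × ZMod b) :=
    { toFun := fun x => Matrix.of fun i j => (φ x i j, ψ x i j)
      map_one' := by
        ext i j <;> by_cases h : i = j <;> simp [Matrix.one_apply, h]
      map_mul' := by
        intro x y; ext i j <;> simp [Matrix.mul_apply, Prod.fst_sum, Prod.snd_sum]
      map_zero' := by ext i j <;> simp
      map_add' := by intro x y; ext i j <;> simp }
  have hco : IsCoprime (a:ℤ) (b:ℤ) := Nat.isCoprime_iff_coprime.mpr hab
  obtain ⟨u, v, huv⟩ := hco
  have ha : ∀ X : Matrix (Fin n) (Fin n) (ZMod a), (a:ℤ) • X = 0 := by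
    intro X; rw [← Int.cast_smul_eq_zsmul (ZMod a)]; simp
  have hb : ∀ X : Matrix (Fin n) (Fin n) (ZMod b), (b:ℤ) • X = 0 := by
    intro X; rw [← Int.cast_smul_eq_zsmul (ZMod b)]; simp
  refine ⟨(e.symm : ZMod a × ZMod b →+* ZMod (a*b)).mapMatrix.comp P, ?_, ?_⟩
  · intro X
    obtain ⟨x, hx⟩ := hφ (Matrix.of fun i j => (e (X i j)).1)
    obtain ⟨y, hy⟩ := hψ (Matrix.of fun i j => (e (X i j)).2)
    have h1 : φ ((v*b) • x + (u*a) • y) = φ x := by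
      have : (v * b) • x = x - (u * a) • x := by
        rw [eq_sub_iff_add_eq, ← add_smul, add_comm, huv, one_smul]
      rw [this, map_add, map_sub, map_zsmul, map_zsmul, mul_smul, mul_smul, ha, ha]; simp
    have h2 : ψ ((v*b) • x + (u*a) • y) = ψ y := by
      have : (u * a) • y = y - (v * b) • y := by
        rw [eq_sub_iff_add_eq, ← add_smul, huv, one_smul]
      rw [this, map_add, map_sub, map_zsmul, map_zsmul, mul_smul, mul_smul, hb, hb]; simp
    refine ⟨(v*b) • x + (u*a) • y, ?_⟩
    ext i j
    change e.symm (φ _ i j, ψ _ i j) = X i j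
    rw [h1, h2, hx, hy]
    simp
  · intro x hx
    have h0 : ∀ i j, (φ x i j, ψ x i j) = 0 := by
      intro i j
      have := congrFun (congrFun hx i) j
      change e.symm (φ x i j, ψ x i j) = 0 at this
      exact (map_eq_zero_iff e.symm e.symm.injective).mp this
    obtain ⟨y, hy⟩ := hφ' x (by ext i j; exact congrArg Prod.fst (h0 i j))
    obtain ⟨y', hy'⟩ := hψ' x (by ext i j; exact congrArg Prod.snd (h0 i j))
    refine ⟨u • y' + v • y, ?_⟩
    calc x = (u * a + v * b) • x := by rw [huv, one_smul]
      _ = (u * a) • ((b:ℤ) • y') + (v * b) • ((a:ℤ) • y) := by rw [← hy, ← hy', add_smul]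
      _ = _ := by
        push_cast
        rw [smul_add, smul_smul, smul_smul, smul_smul, smul_smul]
        ring_nf

theorem my_split {I O : Type*} [Fintype I] [Ring O] {n : ℕ} (hn : n ≠ 0)
    (b : Module.Basis (Fin (n^2)) ℤ O) (m : ℕ) : m ≠ 0 → (∀ p, p.Prime → p ∣ m → MyStar I O p) →
    ∃ φ : O →+* Matrix (Fin n) (Fin n) (ZMod m), Function.Surjective φ ∧
      ∀ x, φ x = 0 → ∃ y, x = (m : ℤ) • y := by
  induction m using Nat.recOnPosPrimePosCoprime with
  | prime_pow p k hp hk =>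
    intro _ h
    have : Fact p.Prime := ⟨hp⟩
    exact my_prime_pow hn b p k hk.ne' (h p hp (dvd_pow_self p hk.ne'))
  | zero => intro h; exact absurd rfl h
  | one =>
    intro _ _
    have : Subsingleton (Matrix (Fin n) (Fin n) (ZMod 1)) := by unfold Matrix; infer_instance
    refine ⟨{ toFun := fun _ => 0, map_one' := Subsingleton.elim _ _, map_mul' := fun _ _ => Subsingleton.elim _ _, map_zero' := rfl, map_add' := fun _ _ => Subsingleton.elim _ _ }, fun X => ⟨0, Subsingleton.elim _ _⟩, fun x _ => ⟨x, by simp⟩⟩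
  | coprime a c ha hc hac iha ihc =>
    intro _ h
    obtain ⟨φ, h1, h2⟩ := iha (by omega) (fun p hp hd => h p hp (hd.mul_right c))
    obtain ⟨ψ, h3, h4⟩ := ihc (by omega) (fun p hp hd => h p hp (hd.mul_left a))
    exact my_crt hac φ h1 h2 ψ h3 h4

/-- the lattice attached to an element -/
def myLat {O : Type*} [Ring O] {n M : ℕ} (φ : O →+* Matrix (Fin n) (Fin n) (ZMod M)) (γ : O) :
    AddSubgroup (Fin n → ℤ) :=
  (LinearMap.range (Matrix.mulVecLin (φ γ))).toAddSubgroup.comap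
    ((Int.castAddHom (ZMod M)).compLeft (Fin n))

theorem my_cast_surj (n M : ℕ) : Function.Surjective ((Int.castAddHom (ZMod M)).compLeft (Fin n)) := by
  intro v
  choose w hw using fun i => ZMod.intCast_surjective (v i)
  exact ⟨w, by ext i; simp [hw]⟩

theorem my_col {n M : ℕ} (A X : Matrix (Fin n) (Fin n) (ZMod M)) :
    (∃ Y, A * Y = X) ↔ ∀ j, (fun i => X i j) ∈ LinearMap.range (Matrix.mulVecLin A) := by
  constructor
  · rintro ⟨Y, rfl⟩ j
    exact ⟨fun i => Y i j, by ext i; simp [Matrix.mulVec, Matrix.mul_apply, dotProduct]⟩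
  · intro h
    choose Y hY using h
    refine ⟨Matrix.of fun i j => Y j i, ?_⟩
    ext i j
    have := congrFun (hY j) i
    simpa [Matrix.mulVec, Matrix.mul_apply, dotProduct] using this

theorem my_lat_inj {O : Type*} [Ring O] {n M : ℕ} (φ : O →+* Matrix (Fin n) (Fin n) (ZMod M))
    (hφ : Function.Surjective φ) (hφ' : ∀ x, φ x = 0 → ∃ y, x = (M : ℤ) • y) (γ γ' : O)
    (hM : ∀ y, ∃ δ, γ * δ = (M:ℤ) • y) (h : myLat φ γ = myLat φ γ') : ∃ u, γ' = γ * u := by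
  have h1 : LinearMap.range (Matrix.mulVecLin (φ γ)) = LinearMap.range (Matrix.mulVecLin (φ γ')) := by
    have := AddSubgroup.comap_injective (my_cast_surj n M) h
    exact Submodule.toAddSubgroup_injective this
  obtain ⟨Y, hY⟩ := (my_col (φ γ) (φ γ')).mpr (by
    rw [h1]; exact (my_col (φ γ') (φ γ')).mp ⟨1, mul_one _⟩)
  obtain ⟨y, rfl⟩ := hφ Y
  obtain ⟨w, hw⟩ := hφ' (γ' - γ * y) (by rw [map_sub, map_mul, hY, sub_self])
  obtain ⟨δ, hδ⟩ := hM w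
  exact ⟨δ + y, by rw [mul_add, hδ, ← hw]; abel⟩

theorem my_lat_index {O : Type*} [Ring O] {n M : ℕ} (φ : O →+* Matrix (Fin n) (Fin n) (ZMod M))
    (hφ : Function.Surjective φ) (hφ' : ∀ x, φ x = 0 → ∃ y, x = (M : ℤ) • y) (γ : O)
    (hM : ∀ y, ∃ δ, γ * δ = (M:ℤ) • y) : 
    (AddMonoidHom.mulLeft γ).range.index = (myLat φ γ).index ^ n := by
  classical
  let Im := (LinearMap.range (Matrix.mulVecLin (φ γ))).toAddSubgroup
  have h0 : (myLat φ γ).index = Im.index :=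
    AddSubgroup.index_comap_of_surjective _ (my_cast_surj n M)
  let T : O →+ (Fin n → Fin n → ZMod M) :=
    { toFun := fun x j i => φ x i j
      map_zero' := by ext; simp
      map_add' := by intro x y; ext; simp }
  have hT : Function.Surjective T := by
    intro X
    obtain ⟨x, hx⟩ := hφ (Matrix.of fun i j => X j i)
    exact ⟨x, by ext j i; simp [T, hx]⟩
  have h1 : (AddMonoidHom.mulLeft γ).range = (AddSubgroup.pi Set.univ (fun _ : Fin n => Im)).comap T := by
    ext x
    rw [AddSubgroup.mem_comap, AddSubgroup.mem_pi]
    have h2 := my_col (φ γ) (φ x)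
    have h3 : (∀ i ∈ Set.univ, T x i ∈ Im) ↔ ∃ Y, φ γ * Y = φ x := by
      rw [h2]; simp only [Set.mem_univ, true_imp_iff]; rfl
    rw [h3]
    constructor
    · rintro ⟨y, rfl⟩
      exact ⟨φ y, by simp⟩
    · rintro ⟨Y, hY⟩
      obtain ⟨y, rfl⟩ := hφ Y
      obtain ⟨w, hw⟩ := hφ' (x - γ * y) (by rw [map_sub, map_mul, hY, sub_self])
      obtain ⟨δ, hδ⟩ := hM w
      exact ⟨δ + y, by simp only [AddMonoidHom.coe_mulLeft]; rw [mul_add, hδ, ← hw]; abel⟩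
  rw [h1, AddSubgroup.index_comap_of_surjective _ hT, AddSubgroup.index_pi, h0]
  simp

theorem my_toMatrix_LR {n : ℕ} (X Y : Matrix (Fin n) (Fin n) ℝ) :
    LinearMap.toMatrix (Matrix.stdBasis ℝ (Fin n) (Fin n)) (Matrix.stdBasis ℝ (Fin n) (Fin n))
      (LinearMap.mulLeft ℝ X ∘ₗ LinearMap.mulRight ℝ Y) = Matrix.kroneckerMap (· * ·) X Yᵀ := by
  ext ⟨i, j⟩ ⟨k, l⟩
  rw [LinearMap.toMatrix_apply, Matrix.stdBasis_eq_single]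
  simp only [LinearMap.comp_apply, LinearMap.mulLeft_apply, LinearMap.mulRight_apply,
    Matrix.kroneckerMap_apply, Matrix.transpose_apply]
  have : ∀ Z : Matrix (Fin n) (Fin n) ℝ, (Matrix.stdBasis ℝ (Fin n) (Fin n)).repr Z (i, j) = Z i j := by
    intro Z
    simp [Matrix.stdBasis]
  rw [this, ← mul_assoc, Matrix.mul_apply]
  simp [Matrix.mul_apply, Matrix.single_apply]
  rw [Finset.sum_eq_single l, Finset.sum_eq_single k]
  · simp
  · intro u _ hu; simp [hu.symm]
  · simp
  · intro u _ hu; simp [hu.symm]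
  · simp

theorem my_det_L {n : ℕ} (X : Matrix (Fin n) (Fin n) ℝ) :
    LinearMap.det (LinearMap.mulLeft ℝ X) = X.det ^ n := by
  have h := my_toMatrix_LR X 1
  have h1 : LinearMap.mulLeft ℝ X ∘ₗ LinearMap.mulRight ℝ (1 : Matrix (Fin n) (Fin n) ℝ) = LinearMap.mulLeft ℝ X := by
    ext; simp
  rw [h1] at h
  rw [← LinearMap.det_toMatrix (Matrix.stdBasis ℝ (Fin n) (Fin n)), h, Matrix.det_kronecker]
  simp

theorem my_tr_LR {n : ℕ} (X Y : Matrix (Fin n) (Fin n) ℝ) :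
    LinearMap.trace ℝ _ (LinearMap.mulLeft ℝ X ∘ₗ LinearMap.mulRight ℝ Y) = X.trace * Y.trace := by
  rw [LinearMap.trace_eq_matrix_trace ℝ (Matrix.stdBasis ℝ (Fin n) (Fin n)), my_toMatrix_LR,
    Matrix.trace_kronecker, Matrix.trace_transpose]


theorem my_basis {O : Type*} [Ring O] {n : ℕ} (b : Module.Basis (Fin (n^2)) ℤ O)
    (j : O →+* Matrix (Fin n) (Fin n) ℝ) (hli : LinearIndependent ℝ (fun i => j (b i))) : ∃ β : Module.Basis (Fin (n^2)) ℝ (Matrix (Fin n) (Fin n) ℝ), ∀ i, β i = j (b i) := by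
  rcases Nat.eq_zero_or_pos n with h | h
  · subst h
    haveI : IsEmpty (Fin (0^2)) := Fin.isEmpty
    exact ⟨Module.Basis.empty _, fun i => (this.false i).elim⟩
  have : Nonempty (Fin (n^2)) := ⟨⟨0, by positivity⟩⟩
  refine ⟨basisOfLinearIndependentOfCardEqFinrank hli ?_, fun i => by rw [coe_basisOfLinearIndependentOfCardEqFinrank]⟩
  simp [Module.finrank_matrix, sq]

theorem my_transfer {O : Type*} [Ring O] {n : ℕ} (b : Module.Basis (Fin (n^2)) ℤ O)
    (j : O →+* Matrix (Fin n) (Fin n) ℝ) (β : Module.Basis (Fin (n^2)) ℝ (Matrix (Fin n) (Fin n) ℝ)) (hβ : ∀ i, β i = j (b i))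
    (f : O →ₗ[ℤ] O) (g : Matrix (Fin n) (Fin n) ℝ →ₗ[ℝ] Matrix (Fin n) (Fin n) ℝ)
    (hfg : ∀ x, g (j x) = j (f x)) :
    LinearMap.toMatrix β β g = (LinearMap.toMatrix b b f).map (Int.castRingHom ℝ) := by
  ext i k
  rw [LinearMap.toMatrix_apply, Matrix.map_apply, LinearMap.toMatrix_apply, hβ, hfg]
  have : j (f (b k)) = ∑ i, ((b.repr (f (b k)) i : ℤ) : ℝ) • β i := by
    conv_lhs => rw [← b.sum_repr (f (b k))]
    rw [map_sum]
    refine Finset.sum_congr rfl fun i _ => ?_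
    rw [map_zsmul, hβ, Int.cast_smul_eq_zsmul]
  rw [this, Module.Basis.repr_sum_self]
  rfl

theorem my_det_transfer {O : Type*} [Ring O] {n : ℕ} (b : Module.Basis (Fin (n^2)) ℤ O)
    (j : O →+* Matrix (Fin n) (Fin n) ℝ) (hli : LinearIndependent ℝ (fun i => j (b i))) (γ : O) :
    ((LinearMap.det (LinearMap.mulLeft ℤ γ) : ℤ) : ℝ) = (j γ).det ^ n := by
  obtain ⟨β, hβ⟩ := my_basis b j hli
  have h := my_transfer b j β hβ (LinearMap.mulLeft ℤ γ) (LinearMap.mulLeft ℝ (j γ)) (by intro x; simp)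
  rw [← my_det_L, ← LinearMap.det_toMatrix β, h, ← LinearMap.det_toMatrix b]
  exact RingHom.map_det (Int.castRingHom ℝ) _

theorem my_star {O : Type*} [Ring O] {n : ℕ} (b : Module.Basis (Fin (n^2)) ℤ O)
    (j : O →+* Matrix (Fin n) (Fin n) ℝ) (hli : LinearIndependent ℝ (fun i => j (b i))) (p : ℕ) (hp : p.Prime) (x : Fin (n^2) → O) (d : ℤ) (hpd : ¬ (p:ℤ) ∣ d)
    (hd : (d:ℝ) = (Matrix.of fun i k => (j (x i * x k)).trace).det) :
    MyStar (Fin (n^2) × Fin (n^2)) O p := by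
  classical
  obtain ⟨β, hβ⟩ := my_basis b j hli
  let E : Fin (n^2) × Fin (n^2) → (O →ₗ[ℤ] O) := fun q =>
    LinearMap.mulLeft ℤ (b q.1) ∘ₗ LinearMap.mulRight ℤ (b q.2)
  let ER : Fin (n^2) × Fin (n^2) → (Matrix (Fin n) (Fin n) ℝ →ₗ[ℝ] Matrix (Fin n) (Fin n) ℝ) := fun q =>
    LinearMap.mulLeft ℝ (j (b q.1)) ∘ₗ LinearMap.mulRight ℝ (j (b q.2))
  have hE : ∀ q, LinearMap.toMatrix β β (ER q) = (LinearMap.toMatrix b b (E q)).map (Int.castRingHom ℝ) := by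
    intro q
    apply my_transfer b j β hβ
    intro x; simp [E, ER]
  let T : Matrix (Fin (n^2) × Fin (n^2)) (Fin (n^2) × Fin (n^2)) ℤ :=
    Matrix.of fun q s => LinearMap.toMatrix b b (E q) s.1 s.2
  let TR : Matrix (Fin (n^2) × Fin (n^2)) (Fin (n^2) × Fin (n^2)) ℝ := T.map (Int.castRingHom ℝ)
  have hTR : ∀ q s, TR q s = LinearMap.toMatrix β β (ER q) s.1 s.2 := by
    intro q s; rw [hE]; rfl
  let G : Matrix (Fin (n^2)) (Fin (n^2)) ℝ := Matrix.of fun i k => (j (b i * b k)).trace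
  let σ : Equiv.Perm (Fin (n^2) × Fin (n^2)) := Equiv.prodComm _ _
  have hprod : TR * (TR.submatrix id σ)ᵀ = Matrix.kroneckerMap (· * ·) G G := by
    ext ⟨i, k⟩ ⟨i', k'⟩
    have h1 : (TR * (TR.submatrix id σ)ᵀ) (i, k) (i', k') =
        Matrix.trace (LinearMap.toMatrix β β (ER (i,k)) * LinearMap.toMatrix β β (ER (i',k'))) := by
      rw [Matrix.mul_apply, Fintype.sum_prod_type, Matrix.trace]
      refine Finset.sum_congr rfl fun u _ => ?_
      rw [Matrix.diag_apply, Matrix.mul_apply]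
      refine Finset.sum_congr rfl fun v _ => ?_
      rw [hTR, Matrix.transpose_apply, Matrix.submatrix_apply, hTR]
      rfl
    have h2 : ER (i,k) ∘ₗ ER (i',k') = LinearMap.mulLeft ℝ (j (b i * b i')) ∘ₗ LinearMap.mulRight ℝ (j (b k' * b k)) := by
      ext1 Z
      simp [ER, mul_assoc]
    rw [h1, ← LinearMap.toMatrix_comp, ← LinearMap.trace_eq_matrix_trace, h2, my_tr_LR,
      Matrix.kroneckerMap_apply]
    congr 1
    simp only [G, Matrix.of_apply]
    rw [map_mul, Matrix.trace_mul_comm, ← map_mul]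
  have hdet : TR.det * ((Equiv.Perm.sign σ : ℤ) * TR.det) = G.det ^ (n^2) * G.det ^ (n^2) := by
    have := congrArg Matrix.det hprod
    rw [Matrix.det_mul, Matrix.det_transpose, Matrix.det_permute', Matrix.det_kronecker] at this
    simpa using this
  have hTdet : TR.det = (T.det : ℤ) := (RingHom.map_det (Int.castRingHom ℝ) T).symm
  let C : Matrix (Fin (n^2)) (Fin (n^2)) ℤ := Matrix.of fun i k => b.repr (x i) k
  have hx : ∀ i, j (x i) = ∑ k, ((C i k : ℤ):ℝ) • j (b k) := by
    intro i
    conv_lhs => rw [← b.sum_repr (x i)]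
    rw [map_sum]
    refine Finset.sum_congr rfl fun k _ => ?_
    rw [map_zsmul, Int.cast_smul_eq_zsmul]; rfl
  have hCG : (Matrix.of fun i k => (j (x i * x k)).trace) =
      C.map (Int.castRingHom ℝ) * G * (C.map (Int.castRingHom ℝ))ᵀ := by
    ext i k
    rw [Matrix.of_apply, map_mul, hx, hx, Finset.sum_mul_sum, Matrix.mul_apply, Matrix.trace_sum]
    simp only [Matrix.trace_sum, Matrix.mul_apply, Finset.sum_mul]
    rw [Finset.sum_comm]
    refine Finset.sum_congr rfl fun u _ => Finset.sum_congr rfl fun v _ => ?_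
    simp [G]; ring
  have hd2 : (d:ℝ) = (C.det : ℝ)^2 * G.det := by
    have hC : (C.map (Int.castRingHom ℝ)).det = (C.det : ℤ) := (RingHom.map_det (Int.castRingHom ℝ) C).symm
    rw [hd, hCG, Matrix.det_mul, Matrix.det_mul, Matrix.det_transpose, hC]; ring
  have hint : d ^ (n^2) * d^(n^2) = ((C.det)^2)^(n^2) * ((C.det)^2)^(n^2) * (T.det * ((Equiv.Perm.sign σ : ℤ) * T.det)) := by
    have : ((d ^ (n^2) * d^(n^2) : ℤ) : ℝ) = ((((C.det)^2)^(n^2) * ((C.det)^2)^(n^2) * (T.det * ((Equiv.Perm.sign σ : ℤ) * T.det)) : ℤ) : ℝ) := by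
      rw [hTdet] at hdet
      simp only [Int.cast_mul, Int.cast_pow]
      rw [hdet, hd2, mul_pow]; ring
    exact_mod_cast this
  refine ⟨T.det, ?_, ?_⟩
  · intro hdvd
    have hpp := Nat.prime_iff_prime_int.mp hp
    have h1 : (p:ℤ) ∣ d ^ (n^2) * d^(n^2) := by
      rw [hint]; exact Dvd.dvd.mul_left (Dvd.dvd.mul_right hdvd _) _
    rw [← pow_add] at h1
    exact hpd (hpp.dvd_of_dvd_pow h1)
  · intro F
    let w : Fin (n^2) × Fin (n^2) → ℤ := fun s => LinearMap.toMatrix b b F s.1 s.2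
    let c := w ᵥ* T.adjugate
    have hc : c ᵥ* T = T.det • w := by
      simp only [c]
      rw [Matrix.vecMul_vecMul, Matrix.adjugate_mul, Matrix.vecMul_smul, Matrix.vecMul_one]
    have hlin : T.det • F = ∑ q, c q • E q := by
      apply (LinearMap.toMatrix b b).injective
      rw [map_smul, map_sum]
      ext u v
      have := congrFun hc (u, v)
      simp only [Matrix.vecMul, dotProduct, T, Matrix.of_apply, Pi.smul_apply] at this
      rw [Matrix.sum_apply]
      simp only [map_smul, Matrix.smul_apply]
      rw [← this]
      rfl
    refine ⟨fun q => c q • b q.1, fun q => b q.2, fun x => ?_⟩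
    have := LinearMap.congr_fun hlin x
    simp only [LinearMap.smul_apply, LinearMap.sum_apply, E, LinearMap.comp_apply, LinearMap.mulLeft_apply, LinearMap.mulRight_apply] at this
    rw [this]
    refine Finset.sum_congr rfl fun q _ => ?_
    rw [smul_mul_assoc, smul_mul_assoc, mul_assoc]

theorem my_indep_aux {n : ℕ} (hn : n ≠ 0) {A : Type*} [DivisionRing A] [CharZero A]
    (ι : A →ₐ[ℚ] Matrix (Fin n) (Fin n) ℝ) (hc : Subalgebra.center ℚ A = ⊥)
    {J : Type*} [Fintype J] (s : J → ℝ) (hs : LinearIndependent ℚ s) (S : Finset J) :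
    ∀ c : J → A, ∑ j ∈ S, s j • ι (c j) = 0 → ∀ j ∈ S, c j = 0 := by
  classical
  have : Nonempty (Fin n) := ⟨⟨0, Nat.pos_of_ne_zero hn⟩⟩
  induction S using Finset.induction_on with
  | empty => simp
  | insert i S hi ih =>
    intro c hsum
    by_cases h0 : c i = 0
    · rw [Finset.sum_insert hi, h0, map_zero, smul_zero, zero_add] at hsum
      intro j hj
      rcases Finset.mem_insert.mp hj with rfl | hj
      · exact h0
      · exact ih c hsum j hj
    · exfalso
      let c' : J → A := fun j => (c i)⁻¹ * c j
      have hci : c' i = 1 := inv_mul_cancel₀ h0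
      have hsum' : ∑ j ∈ insert i S, s j • ι (c' j) = 0 := by
        have := congrArg (fun Z => ι ((c i)⁻¹) * Z) hsum
        simp only [Finset.mul_sum, mul_zero] at this
        rw [← this]
        refine Finset.sum_congr rfl fun j _ => ?_
        simp only [c']
        rw [map_mul, mul_smul_comm]
      have hcen : ∀ j ∈ S, ∃ q : ℚ, c' j = algebraMap ℚ A q := by
        intro j hj
        have : c' j ∈ Subalgebra.center ℚ A := by
          rw [Subalgebra.mem_center_iff]
          intro x
          have h1 := ih (fun j => x * c' j - c' j * x) (by
            have e1 : ∑ j ∈ insert i S, s j • ι (x * c' j - c' j * x) = 0 := by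
              have e2 : ∀ j, s j • ι (x * c' j - c' j * x) = ι x * (s j • ι (c' j)) - (s j • ι (c' j)) * ι x := by
                intro j
                rw [map_sub, map_mul ι x (c' j), map_mul ι (c' j) x, smul_sub, mul_smul_comm, smul_mul_assoc]
              simp only [e2]
              rw [Finset.sum_sub_distrib, ← Finset.mul_sum, ← Finset.sum_mul, hsum']
              simp
            rw [Finset.sum_insert hi, hci] at e1
            simpa using e1) j hj
          exact sub_eq_zero.mp h1
        rw [hc, Algebra.mem_bot] at this
        obtain ⟨q, hq⟩ := this
        exact ⟨q, hq.symm⟩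
      choose! q hq using hcen
      have hz : s i + ∑ j ∈ S, (q j : ℝ) * s j = 0 := by
        have k : Fin n := ⟨0, Nat.pos_of_ne_zero hn⟩
        rw [Finset.sum_insert hi, hci] at hsum'
        have e : ∑ j ∈ S, s j • ι (c' j) = ∑ j ∈ S, ((q j : ℝ) * s j) • (1 : Matrix (Fin n) (Fin n) ℝ) := by
          refine Finset.sum_congr rfl fun j hj => ?_
          rw [hq j hj, AlgHom.commutes, Algebra.algebraMap_eq_smul_one, mul_comm, mul_smul]
          rw [Rat.cast_smul_eq_qsmul]
        rw [e, map_one, ← Finset.sum_smul, ← add_smul] at hsum'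
        have := congrFun (congrFun hsum' k) k
        simpa using this
      have hlin := (Fintype.linearIndependent_iff.mp hs) (fun j => if j = i then 1 else if j ∈ S then q j else 0) (by
        have e : ∀ j, (if j = i then (1:ℚ) else if j ∈ S then q j else 0) • s j
            = (if j = i then s i else 0) + (if j ∈ S then (q j : ℝ) * s j else 0) := by
          intro j
          by_cases h : j = i
          · subst h; simp [hi]
          · by_cases h' : j ∈ S <;> simp [h, h', Rat.smul_def]
        simp only [e]
        rw [Finset.sum_add_distrib, Finset.sum_ite_eq' Finset.univ i (fun _ => s i)]
        simpa using hz) i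
      simp at hlin

theorem my_indep {n : ℕ} (hn : n ≠ 0) {A : Type*} [DivisionRing A] [CharZero A]
    (ι : A →ₐ[ℚ] Matrix (Fin n) (Fin n) ℝ) (hc : Subalgebra.center ℚ A = ⊥)
    {I : Type*} [Fintype I] (a : I → A) (ha : LinearIndependent ℚ a) :
    LinearIndependent ℝ (fun i => ι (a i)) := by
  rw [Fintype.linearIndependent_iff]
  intro r hr
  let W := Submodule.span ℚ (Set.range r)
  have : Module.Finite ℚ W := Module.Finite.span_of_finite ℚ (Set.finite_range r)
  let β := Module.finBasis ℚ W
  have hrW : ∀ i, r i ∈ W := fun i => Submodule.subset_span ⟨i, rfl⟩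
  let q : I → Fin (Module.finrank ℚ W) → ℚ := fun i k => β.repr ⟨r i, hrW i⟩ k
  have hq : ∀ i, r i = ∑ k, q i k • (β k : ℝ) := by
    intro i
    have := congrArg (Subtype.val) (β.sum_repr ⟨r i, hrW i⟩)
    change _ = r i at this
    conv_lhs => rw [← this]
    rw [Submodule.coe_sum]
    rfl
  have hs : LinearIndependent ℚ (fun k => (β k : ℝ)) :=
    β.linearIndependent.map' W.subtype (Submodule.ker_subtype _)
  have key := my_indep_aux hn ι hc (fun k => (β k : ℝ)) hs Finset.univ (fun k => ∑ i, q i k • a i) (by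
    rw [← hr]
    simp only [map_sum, Finset.smul_sum]
    rw [Finset.sum_comm]
    refine Finset.sum_congr rfl fun i _ => ?_
    conv_rhs => rw [hq i]
    rw [Finset.sum_smul]
    refine Finset.sum_congr rfl fun k _ => ?_
    rw [map_smul, smul_assoc, smul_comm])
  intro i
  rw [hq i]
  refine Finset.sum_eq_zero fun k hk => ?_
  rw [Fintype.linearIndependent_iff.mp ha (fun i => q i k) (key k hk) i, zero_smul]

theorem my_order_basis {n : ℕ} {A : Type*} [DivisionRing A] [CharZero A]
    (hf : Module.finrank ℚ A = n ^ 2) (O : Subring A) (hO : IsOrder A O) :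
    ∃ b : Module.Basis (Fin (n^2)) ℤ O, LinearIndependent ℚ (fun i => (b i : A)) := by
  classical
  have hfin : Module.Finite ℤ O := by
    have := hO.1
    have h2 : AddGroup.FG O.toAddSubgroup := (AddGroup.fg_iff_addSubgroup_fg _).mpr this
    exact Module.Finite.iff_addGroup_fg.mpr h2
  have hfree : Module.Free ℤ O := inferInstance
  let b := Module.Free.chooseBasis ℤ O
  have hZ : LinearIndependent ℤ (fun i => (b i : A)) :=
    b.linearIndependent.map' (O.subtype.toAddMonoidHom.toIntLinearMap) (by
      rw [LinearMap.ker_eq_bot]; exact Subtype.val_injective)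
  have hQ : LinearIndependent ℚ (fun i => (b i : A)) := (LinearIndependent.iff_fractionRing ℤ ℚ).mp hZ
  have hsp : ⊤ ≤ Submodule.span ℚ (Set.range (fun i => (b i : A))) := by
    rw [← hO.2, Submodule.span_le]
    intro x hx
    have : x = ∑ i, b.repr ⟨x, hx⟩ i • (b i : A) := by
      have := congrArg (Subtype.val) (b.sum_repr ⟨x, hx⟩)
      change _ = x at this
      conv_lhs => rw [← this]
      simp
    rw [this]
    refine Submodule.sum_mem _ fun i _ => zsmul_mem (Submodule.subset_span (Set.mem_range_self i)) _
  let B := Module.Basis.mk hQ hsp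
  have hcard : Fintype.card (Module.Free.ChooseBasisIndex ℤ O) = n^2 := by
    rw [← hf, Module.finrank_eq_card_basis B]
  let e := Fintype.equivFinOfCardEq hcard
  refine ⟨b.reindex e, ?_⟩
  have := hQ.comp e.symm e.symm.injective
  simpa [Function.comp_def] using this

theorem my_index {O : Type*} [Ring O] {k : ℕ} (b : Module.Basis (Fin k) ℤ O) (γ : O)
    (hγ : ∀ x, γ * x = 0 → x = 0) :
    (AddMonoidHom.mulLeft γ).range.index = (LinearMap.det (LinearMap.mulLeft ℤ γ)).natAbs := by
  have : Module.Free ℤ O := Module.Free.of_basis b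
  have : Module.Finite ℤ O := Module.Finite.of_basis b
  have hinj : Function.Injective (LinearMap.mulLeft ℤ γ) := by
    rw [injective_iff_map_eq_zero]; exact hγ
  have h := Submodule.natAbs_det_equiv (LinearMap.range (LinearMap.mulLeft ℤ γ)) (LinearEquiv.ofInjective _ hinj)
  have h2 : (LinearMap.range (LinearMap.mulLeft ℤ γ)).subtype ∘ₗ AddMonoidHom.toIntLinearMap
     ((LinearEquiv.ofInjective _ hinj : O ≃ₗ[ℤ] LinearMap.range (LinearMap.mulLeft ℤ γ)) : O →+ LinearMap.range (LinearMap.mulLeft ℤ γ)) = LinearMap.mulLeft ℤ γ := by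
    ext x; rfl
  rw [← h2, h]
  rfl

theorem my_one {n : ℕ} (hn : n ≠ 0) {A : Type*} [DivisionRing A] [CharZero A]
    (ι : A →ₐ[ℚ] Matrix (Fin n) (Fin n) ℝ) (O : Subring A)
    (b : Module.Basis (Fin (n^2)) ℤ O)
    (hli : LinearIndependent ℝ (fun i => (ι.toRingHom.comp O.subtype) (b i)))
    (v : O) (hv : |(ι (v:A)).det| < 1) : v = 0 := by
  have h := my_det_transfer b (ι.toRingHom.comp O.subtype) hli v
  have h1 : |((LinearMap.det (LinearMap.mulLeft ℤ v) : ℤ) : ℝ)| < 1 := by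
    rw [h, abs_pow]
    exact pow_lt_one₀ (abs_nonneg _) hv hn
  have h2 : LinearMap.det (LinearMap.mulLeft ℤ v) = 0 := by
    have : |LinearMap.det (LinearMap.mulLeft ℤ v)| < 1 := by exact_mod_cast h1
    exact Int.abs_lt_one_iff.mp this
  rw [h2] at h
  by_contra hne
  have hne' : (v : A) ≠ 0 := fun h => hne (Subtype.ext h)
  have h3 : (ι (v:A)).det ≠ 0 := by
    have : ι (v:A) * ι ((v:A)⁻¹) = 1 := by rw [← map_mul, mul_inv_cancel₀ hne', map_one]
    have h4 := congrArg Matrix.det this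
    rw [Matrix.det_mul, Matrix.det_one] at h4
    exact left_ne_zero_of_mul_eq_one h4
  exact pow_ne_zero n h3 (by simpa using h.symm)

theorem my_conj_det {n : ℕ} (hn : n ≠ 0) (z : Matrix.GeneralLinearGroup (Fin n) ℝ) (m : ℕ) (hm : 1 ≤ m)
    (Y : Matrix (Fin n) (Fin n) ℝ) :
    (((m : ℝ) ^ (-(1 : ℝ) / (n : ℝ))) •
        ((↑z⁻¹ : Matrix (Fin n) (Fin n) ℝ) * Y * (↑z : Matrix (Fin n) (Fin n) ℝ))).det = Y.det / m := by
  have hm' : (0:ℝ) < m := by exact_mod_cast hm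
  have hn' : (n:ℝ) ≠ 0 := by exact_mod_cast hn
  rw [Matrix.det_smul, Fintype.card_fin, ← Real.rpow_natCast, ← Real.rpow_mul hm'.le,
    div_mul_cancel₀ _ hn', Real.rpow_neg_one]
  have : ((↑z⁻¹ : Matrix (Fin n) (Fin n) ℝ) * Y * (↑z : Matrix (Fin n) (Fin n) ℝ)).det = Y.det :=
    Matrix.det_units_conj' z Y
  rw [this, div_eq_inv_mul]

theorem my_core {n : ℕ} (hn : n ≠ 0) (ρ₀ : ℝ)
    (hρ : ∀ (X X' k k' : Matrix (Fin n) (Fin n) ℝ), IsSO k → IsSO k' →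
      (∀ i j, |(X - k) i j| < ρ₀) → (∀ i j, |(X' - k') i j| < ρ₀) → |(X' - X).det| < 1)
    {A : Type*} [DivisionRing A] [CharZero A]
    (ι : A →ₐ[ℚ] Matrix (Fin n) (Fin n) ℝ) (hc : Subalgebra.center ℚ A = ⊥)
    (hf : Module.finrank ℚ A = n ^ 2) (O Omax : Subring A) (hO : IsOrder A Omax) (hle : O ≤ Omax)
    (D : ℕ) (hD : IsDisc ι Omax D) (z : Matrix.GeneralLinearGroup (Fin n) ℝ)
    (ρ : ℝ) (hρ' : ρ ≤ ρ₀) (m : ℕ) (hm : 1 ≤ m) (hcop : Nat.Coprime m D) :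
    ∃ f : A → AddSubgroup (Fin n → ℤ), Set.InjOn f (OSet ι O z m ρ) ∧
      ∀ γ ∈ OSet ι O z m ρ, (f γ).index = m := by
  classical
  obtain ⟨b, hb⟩ := my_order_basis hf Omax hO
  have hli : LinearIndependent ℝ (fun i => (ι.toRingHom.comp Omax.subtype) (b i)) :=
    my_indep hn ι hc _ hb
  have hm' : (0:ℝ) < m := by exact_mod_cast hm
  have hM0 : m ^ n ≠ 0 := pow_ne_zero _ (by omega)
  obtain ⟨φ, hφ, hker⟩ := my_split (I := Fin (n^2) × Fin (n^2)) hn b (m^n) hM0 (by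
    intro p hp hpm
    have hpm' : p ∣ m := hp.dvd_of_dvd_pow hpm
    have hpD : ¬ (p:ℤ) ∣ D := by
      intro h
      have h' : p ∣ D := by exact_mod_cast h
      exact hp.one_lt.ne' (Nat.dvd_one.mp (hcop ▸ Nat.dvd_gcd hpm' h'))
    have : ∃ d : ℤ, (∃ x : Fin (n ^ 2) → A, (∀ i, x i ∈ Omax) ∧
      (d : ℝ) = (Matrix.of fun i j => (ι (x i * x j)).trace).det) ∧ ¬ (p:ℤ) ∣ d := by
      by_contra hcon
      push Not at hcon
      apply hpD
      have h1 : (D:ℤ) ∈ Ideal.span {(D:ℤ)} := Ideal.mem_span_singleton_self _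
      rw [IsDisc] at hD
      rw [← hD] at h1
      have h2 : Ideal.span {d : ℤ | ∃ x : Fin (n ^ 2) → A, (∀ i, x i ∈ Omax) ∧
        (d : ℝ) = (Matrix.of fun i j => (ι (x i * x j)).trace).det} ≤ Ideal.span {(p:ℤ)} := by
        rw [Ideal.span_le]
        intro d hd
        exact Ideal.mem_span_singleton.mpr (hcon d hd)
      exact Ideal.mem_span_singleton.mp (h2 h1)
    obtain ⟨d, ⟨x, hx, hdx⟩, hpd⟩ := this
    exact my_star b (ι.toRingHom.comp Omax.subtype) hli p hp (fun i => ⟨x i, hx i⟩) d hpd hdx)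
  have hdetγ : ∀ γ ∈ OSet ι O z m ρ, (ι γ).det = m := fun γ h => h.2.1
  have hmem : ∀ γ ∈ OSet ι O z m ρ, γ ∈ Omax := fun γ h => hle h.1
  have hindex : ∀ γ (h : γ ∈ OSet ι O z m ρ),
      (AddMonoidHom.mulLeft (⟨γ, hmem γ h⟩ : Omax)).range.index = m ^ n := by
    intro γ h
    have hγ0 : γ ≠ 0 := by
      rintro rfl
      have h0 := hdetγ 0 h
      have : Nonempty (Fin n) := ⟨⟨0, Nat.pos_of_ne_zero hn⟩⟩
      rw [map_zero, Matrix.det_zero] at h0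
      exact hm'.ne h0
    rw [my_index b]
    · have h1 := my_det_transfer b (ι.toRingHom.comp Omax.subtype) hli ⟨γ, hmem γ h⟩
      have h2 : (ι.toRingHom.comp Omax.subtype) ⟨γ, hmem γ h⟩ = ι γ := rfl
      rw [h2, hdetγ γ h] at h1
      have h3 : LinearMap.det (LinearMap.mulLeft ℤ (⟨γ, hmem γ h⟩ : Omax)) = ((m ^ n : ℕ) : ℤ) := by
        push_cast
        exact_mod_cast h1
      rw [h3, Int.natAbs_natCast]
    · intro x hx
      have := congrArg Subtype.val hx
      simp [hγ0] at this
      exact this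
  have hMem : ∀ γ (h : γ ∈ OSet ι O z m ρ), ∀ y : Omax, ∃ δ, (⟨γ, hmem γ h⟩ : Omax) * δ = ((m^n : ℕ):ℤ) • y := by
    intro γ h y
    have := AddSubgroup.nsmul_index_mem (AddMonoidHom.mulLeft (⟨γ, hmem γ h⟩ : Omax)).range y
    rw [hindex γ h] at this
    obtain ⟨δ, hδ⟩ := this
    exact ⟨δ, by rw [natCast_zsmul, ← hδ]; rfl⟩
  refine ⟨fun γ => if h : γ ∈ Omax then myLat φ ⟨γ, h⟩ else ⊤, ?_, ?_⟩
  · intro γ h γ' h' heq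
    simp only [dif_pos (hmem γ h), dif_pos (hmem γ' h')] at heq
    obtain ⟨u, hu⟩ := my_lat_inj φ hφ hker _ _ (hMem γ h) heq
    have hu' : γ' = γ * (u:A) := congrArg Subtype.val hu
    obtain ⟨k, hk, hkX⟩ := h.2.2
    obtain ⟨k', hk', hkX'⟩ := h'.2.2
    have hlt := hρ _ _ k k' hk hk' (fun i j => (hkX i j).trans_le hρ') (fun i j => (hkX' i j).trans_le hρ')
    rw [← smul_sub, ← sub_mul, ← mul_sub, ← map_sub, my_conj_det hn z m hm] at hlt
    have h1 : γ' - γ = γ * ((u - 1 : Omax) : A) := by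
      rw [hu']; push_cast; rw [mul_sub, mul_one]
    rw [h1, map_mul, Matrix.det_mul, hdetγ γ h, mul_div_cancel_left₀ _ hm'.ne'] at hlt
    have := my_one hn ι Omax b hli (u - 1) hlt
    rw [hu', sub_eq_zero.mp this]
    simp
  · intro γ h
    simp only [dif_pos (hmem γ h)]
    have := my_lat_index φ hφ hker _ (hMem γ h)
    rw [hindex γ h] at this
    exact (Nat.pow_left_injective hn this).symm

/-- For odd `n ≥ 3` there is `ρ₀ > 0` depending only on `n`, and for every
`ε > 0` a constant `C > 0` depending only on `n, ε`, such that for every maximal order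
`𝒪_max ⊇ 𝒪`, every `ρ ∈ (0, ρ₀]` and every positive integer `m` coprime to `disc 𝒪_max`,
the set `𝒪(m; z, ρ)` is finite with `#𝒪(m; z, ρ) ≤ C·m^(n-1+ε)`. -/
theorem stmt16 (n : ℕ) (hn : 3 ≤ n) (hodd : Odd n) :
    ∃ ρ₀ : ℝ, 0 < ρ₀ ∧
      ∀ ε : ℝ, 0 < ε →
      ∃ C : ℝ, 0 < C ∧
        ∀ (A : Type) [DivisionRing A] [CharZero A]
          (ι : A →ₐ[ℚ] Matrix (Fin n) (Fin n) ℝ),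
          Function.Injective ι →
          Subalgebra.center ℚ A = ⊥ →
          Module.finrank ℚ A = n ^ 2 →
          ∀ O Omax : Subring A, IsOrder A O → IsOrder A Omax → O ≤ Omax →
          (∀ O' : Subring A, IsOrder A O' → Omax ≤ O' → O' = Omax) →
          ∀ D : ℕ, IsDisc ι Omax D →
          ∀ z : Matrix.GeneralLinearGroup (Fin n) ℝ,
          ∀ ρ : ℝ, 0 < ρ → ρ ≤ ρ₀ →
          ∀ m : ℕ, 1 ≤ m → Nat.Coprime m D →
          (OSet ι O z m ρ).Finite ∧
            ((OSet ι O z m ρ).ncard : ℝ) ≤ C * (m : ℝ) ^ ((n : ℝ) - 1 + ε) := by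
  have hn0 : n ≠ 0 := by omega
  obtain ⟨ρ₀, hρ₀, hρ⟩ := my_rho n hodd
  refine ⟨ρ₀, hρ₀, fun ε hε => ?_⟩
  have hn1 : (0:ℝ) < (n:ℝ) - 1 := by
    have : (3:ℝ) ≤ n := by exact_mod_cast hn
    linarith
  obtain ⟨C, hC, hdiv⟩ := my_divisor_bound (ε / ((n:ℝ) - 1)) (div_pos hε hn1)
  refine ⟨C ^ (n-1), pow_pos hC _, ?_⟩
  intro A _ _ ι _ hc hf O Omax _ hOmax hle _ D hD z ρ _ hρ' m hm hcop
  obtain ⟨f, hinj, hidx⟩ := my_core hn0 ρ₀ hρ ι hc hf O Omax hOmax hle D hD z ρ hρ' m hm hcop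
  obtain ⟨k, rfl⟩ : ∃ k, n = k + 1 := ⟨n - 1, by omega⟩
  obtain ⟨hfin, hcard⟩ := my_count k m (by omega)
  have hmaps : Set.MapsTo f (OSet ι O z m ρ) {H : AddSubgroup (Fin (k+1) → ℤ) | H.index = m} := hidx
  have hfinite : (OSet ι O z m ρ).Finite := Set.Finite.of_injOn hmaps hinj hfin
  refine ⟨hfinite, ?_⟩
  have h1 : (OSet ι O z m ρ).ncard ≤ (m.divisors.card * m)^k :=
    (Set.ncard_le_ncard_of_injOn f hmaps hinj hfin).trans hcard
  have hm' : (0:ℝ) < m := by exact_mod_cast hm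
  have hk : ((k+1 : ℕ):ℝ) - 1 = k := by push_cast; ring
  have hk1 : (k:ℝ) ≠ 0 := by rw [← hk]; exact hn1.ne'
  have h2 : (m.divisors.card : ℝ) ≤ C * (m:ℝ) ^ (ε / k) := by
    have := hdiv m (by omega)
    rwa [hk] at this
  calc ((OSet ι O z m ρ).ncard : ℝ) ≤ ((m.divisors.card : ℝ) * m)^k := by exact_mod_cast h1
    _ ≤ (C * (m:ℝ) ^ (ε / k) * m)^k := by gcongr
    _ = C ^ (k + 1 - 1) * (m:ℝ) ^ (((k+1 : ℕ):ℝ) - 1 + ε) := by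
      rw [hk, Nat.add_sub_cancel, mul_pow, mul_pow, ← Real.rpow_natCast ((m:ℝ) ^ (ε / k)), ← Real.rpow_mul hm'.le,
        div_mul_cancel₀ _ hk1, Real.rpow_add hm', Real.rpow_natCast]
      ring
end

section
/- For all integers n ≥ 1 and m ≥ 1, the set of additive subgroups H of ℤⁿ with index [ℤⁿ : H] = m is finite, and its cardinality is at most τ(m)^{n-1} · m^{n-1}. -/
theorem idx_formula {A G : Type*} [AddCommGroup A] [AddCommGroup G] (f : A →+ G) (p : G →+ ℤ)
    (hfp : f.range = p.ker) (hp : Function.Surjective p) (H : AddSubgroup G) :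
    (H.comap f).index * (H.map p).index = H.index := by
  rw [AddSubgroup.index_map, AddSubgroup.index_comap, hfp,
    AddMonoidHom.range_eq_top.2 hp, AddSubgroup.index_top, mul_one,
    ← AddSubgroup.relIndex_sup_left, sup_comm]
  exact AddSubgroup.relIndex_mul_index le_sup_right

theorem fiber_bound {A G : Type*} [AddCommGroup A] [AddCommGroup G] (f : A →+ G) (p : G →+ ℤ)
    (hfp : f.range = p.ker) (hp : Function.Surjective p) (m : ℕ) (hm : 1 ≤ m)
    (K : AddSubgroup A) (hK : K.index ≠ 0) :
    {H : AddSubgroup G | H.index = m ∧ H.comap f = K}.Finite ∧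
    {H : AddSubgroup G | H.index = m ∧ H.comap f = K}.ncard ≤ K.index := by
  obtain ⟨t, ht⟩ := hp 1
  set d : ℤ := ((m / K.index : ℕ) : ℤ) with hd
  have hmap : ∀ H : AddSubgroup G, H.index = m ∧ H.comap f = K →
      H.map p = AddSubgroup.zmultiples d := by
    rintro H ⟨h1, h2⟩
    have h := idx_formula f p hfp hp H
    rw [h1, h2] at h
    have h3 : (H.map p).index = m / K.index := by
      rw [← h, Nat.mul_div_cancel_left _ (Nat.pos_of_ne_zero hK)]
    obtain ⟨g, hg⟩ := Int.subgroup_cyclic (H.map p)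
    rw [← AddSubgroup.zmultiples_eq_closure] at hg
    rw [hg, Int.index_zmultiples] at h3
    rw [hg, hd, ← h3, Int.zmultiples_natAbs]
  have hex : ∀ H : AddSubgroup G, ∃ a : A, (H.index = m ∧ H.comap f = K) → d • t + f a ∈ H := by
    intro H
    by_cases hH : H.index = m ∧ H.comap f = K
    · have : d ∈ H.map p := by
        rw [hmap H hH]; exact AddSubgroup.mem_zmultiples d
      obtain ⟨h, hh, hhd⟩ := this
      have : h - d • t ∈ f.range := by
        rw [hfp, AddMonoidHom.mem_ker, map_sub, map_zsmul, ht, hhd]; simp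
      obtain ⟨a, ha⟩ := this
      refine ⟨a, fun _ => ?_⟩
      rw [ha]; simpa using hh
    · exact ⟨0, fun h => absurd h hH⟩
  choose φ hφ using hex
  have key : ∀ H H' : AddSubgroup G, (H.index = m ∧ H.comap f = K) →
      (H'.index = m ∧ H'.comap f = K) → (φ H : A ⧸ K) = (φ H' : A ⧸ K) → H ≤ H' := by
    intro H H' h h' e x hx
    have hKH : ∀ b, f b ∈ H ↔ b ∈ K := fun b => by rw [← h.2]; rfl
    have hKH' : ∀ b, f b ∈ H' ↔ b ∈ K := fun b => by rw [← h'.2]; rfl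
    have e1 := (hKH' _).2 (QuotientAddGroup.eq.1 e.symm)
    have e2 : d • t + f (φ H) ∈ H' := by
      have := H'.add_mem (hφ H' h') e1
      rw [map_add, map_neg] at this
      convert this using 1
      abel
    have hpx : p x ∈ H.map p := ⟨x, hx, rfl⟩
    rw [hmap H h] at hpx
    obtain ⟨k, hk⟩ := AddSubgroup.mem_zmultiples_iff.1 hpx
    have hf0 : ∀ a, p (f a) = 0 := fun a => by
      have : f a ∈ f.range := ⟨a, rfl⟩
      rw [hfp] at this; exact this
    have : x - k • (d • t + f (φ H)) ∈ f.range := by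
      rw [hfp, AddMonoidHom.mem_ker, map_sub, map_zsmul, map_add, map_zsmul, ht, hf0, ← hk]; simp
    obtain ⟨b, hb⟩ := this
    have hb1 : f b ∈ H := by
      rw [hb]; exact H.sub_mem hx (H.zsmul_mem (hφ H h) k)
    have hb2 := (hKH' b).2 ((hKH b).1 hb1)
    have := H'.add_mem hb2 (H'.zsmul_mem e2 k)
    rw [hb] at this
    simpa using this
  have hfin : Finite (A ⧸ K) := Nat.finite_of_card_ne_zero hK
  have hinj : Set.InjOn (fun H => (φ H : A ⧸ K))
      {H : AddSubgroup G | H.index = m ∧ H.comap f = K} := fun H h H' h' e =>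
    le_antisymm (key H H' h h' e) (key H' H h' h e.symm)
  refine ⟨Set.Finite.of_injOn (Set.mapsTo_univ _ _) hinj Set.finite_univ, ?_⟩
  have := Set.ncard_le_ncard_of_injOn _ (fun a _ => Set.mem_univ _) hinj Set.finite_univ
  rw [Set.ncard_univ] at this
  exact this

theorem step_bound {A G : Type*} [AddCommGroup A] [AddCommGroup G] (f : A →+ G) (p : G →+ ℤ)
    (hfp : f.range = p.ker) (hp : Function.Surjective p) (n m : ℕ) (hm : 1 ≤ m)
    (ih : ∀ e, 1 ≤ e → {H : AddSubgroup A | H.index = e}.Finite ∧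
      {H : AddSubgroup A | H.index = e}.ncard ≤ e.divisors.card ^ n * e ^ n) :
    {H : AddSubgroup G | H.index = m}.Finite ∧
    {H : AddSubgroup G | H.index = m}.ncard ≤ m.divisors.card ^ (n+1) * m ^ (n+1) := by
  classical
  let SA : ℕ → Finset (AddSubgroup A) := fun e =>
    if h : 1 ≤ e then (ih e h).1.toFinset else ∅
  let T : AddSubgroup A → Finset (AddSubgroup G) := fun K =>
    if h : K.index ≠ 0 then (fiber_bound f p hfp hp m hm K h).1.toFinset else ∅
  have hT : ∀ K, (T K).card ≤ K.index := by
    intro K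
    by_cases h : K.index ≠ 0
    · have := (fiber_bound f p hfp hp m hm K h).2
      rw [Set.ncard_eq_toFinset_card _ (fiber_bound f p hfp hp m hm K h).1] at this
      simpa only [T, dif_pos h] using this
    · simp only [T, dif_neg h]; simp
  let U := m.divisors.biUnion fun e => (SA e).biUnion T
  have hsub : {H : AddSubgroup G | H.index = m} ⊆ (U : Set (AddSubgroup G)) := by
    intro H hH
    have hH' : H.index = m := hH
    have h := idx_formula f p hfp hp H
    rw [hH'] at h
    have h0 : (H.comap f).index ≠ 0 := by
      intro h0; rw [h0] at h; omega
    simp only [U, Finset.mem_coe, Finset.mem_biUnion]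
    refine ⟨(H.comap f).index, ?_, H.comap f, ?_, ?_⟩
    · rw [Nat.mem_divisors]; exact ⟨⟨_, h.symm⟩, by omega⟩
    · have h1 : 1 ≤ (H.comap f).index := Nat.pos_of_ne_zero h0
      simp only [SA, dif_pos h1, Set.Finite.mem_toFinset]; rfl
    · simp only [T, dif_pos h0]; simpa using hH'
  refine ⟨U.finite_toSet.subset hsub, ?_⟩
  refine (Set.ncard_le_ncard hsub U.finite_toSet).trans ?_
  rw [Set.ncard_coe_finset]
  have hU : U.card ≤ m.divisors.card * (m.divisors.card ^ n * m ^ n * m) := by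
    refine Finset.card_biUnion_le_card_mul _ _ _ fun e he => ?_
    have hem := Nat.dvd_of_mem_divisors he
    have he1 : 1 ≤ e := Nat.pos_of_mem_divisors he
    have hle : e ≤ m := Nat.le_of_dvd hm hem
    have h1 : (SA e).card ≤ e.divisors.card ^ n * e ^ n := by
      have := (ih e he1).2
      rw [Set.ncard_eq_toFinset_card _ (ih e he1).1] at this
      simpa only [SA, dif_pos he1] using this
    have h2 : ((SA e).biUnion T).card ≤ (SA e).card * e := by
      refine Finset.card_biUnion_le_card_mul _ _ _ fun K hK => ?_
      simp only [SA, dif_pos he1, Set.Finite.mem_toFinset, Set.mem_setOf_eq] at hK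
      exact hK ▸ hT K
    have h3 : e.divisors.card ≤ m.divisors.card :=
      Finset.card_le_card (Nat.divisors_subset_of_dvd (by omega) hem)
    calc _ ≤ _ := h2
      _ ≤ (e.divisors.card ^ n * e ^ n) * e := by gcongr
      _ ≤ _ := by gcongr
  refine hU.trans (le_of_eq (by ring))

theorem main_bound (n : ℕ) : ∀ m, 1 ≤ m →
    {H : AddSubgroup (Fin (n+1) → ℤ) | H.index = m}.Finite ∧
      {H : AddSubgroup (Fin (n+1) → ℤ) | H.index = m}.ncard ≤ m.divisors.card ^ n * m ^ n := by
  have hex : ∀ n : ℕ, ∃ (f : (Fin n → ℤ) →+ (Fin (n+1) → ℤ)) (p : (Fin (n+1) → ℤ) →+ ℤ),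
      f.range = p.ker ∧ Function.Surjective p := by
    intro n
    refine ⟨{ toFun := fun x => Fin.cons 0 x, map_zero' := ?_, map_add' := ?_ },
      Pi.evalAddMonoidHom _ 0, ?_, fun x => ⟨fun _ => x, rfl⟩⟩
    · ext i; refine Fin.cases ?_ (fun j => ?_) i <;> simp
    · intro x y; ext i; refine Fin.cases ?_ (fun j => ?_) i <;> simp
    · ext x
      constructor
      · rintro ⟨y, rfl⟩; simp [AddMonoidHom.mem_ker]
      · intro hx
        have hx' : x 0 = 0 := hx
        refine ⟨Fin.tail x, ?_⟩
        have := Fin.cons_self_tail x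
        rw [hx'] at this
        exact this
  induction n with
  | zero =>
    intro m hm
    obtain ⟨f, p, hfp, hp⟩ := hex 0
    have h := fiber_bound f p hfp hp m hm ⊤ (by simp)
    have e : {H : AddSubgroup (Fin (0+1) → ℤ) | H.index = m ∧ H.comap f = ⊤} =
        {H | H.index = m} := by
      ext H
      simp only [Set.mem_setOf_eq, and_iff_left_iff_imp]
      intro _
      exact Subsingleton.elim _ _
    rw [e] at h
    simpa using h
  | succ n ih =>
    intro m hm
    obtain ⟨f, p, hfp, hp⟩ := hex (n+1)
    exact step_bound f p hfp hp n m hm ih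

/-- For `n, m ≥ 1` the set of additive subgroups of `ℤⁿ` of index `m`
is finite, of cardinality at most `τ(m)^(n-1) * m^(n-1)`. -/
theorem stmt17 (n m : ℕ) (hn : 1 ≤ n) (hm : 1 ≤ m) :
    {H : AddSubgroup (Fin n → ℤ) | H.index = m}.Finite ∧
      {H : AddSubgroup (Fin n → ℤ) | H.index = m}.ncard ≤
        m.divisors.card ^ (n - 1) * m ^ (n - 1) := by
  obtain ⟨k, rfl⟩ : ∃ k, n = k + 1 := ⟨n - 1, by omega⟩
  exact main_bound k m hm
end
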